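/- arXiv:1602.05150 — 8 statements merged into one kernel-verified Lean document; each statement's English description precedes it below -/
import Mathlib

section
/- (Effect of a happy swap chain) Let σ be a configuration on a finite connected simple graph G and let v_1, …, v_m (m ≥ 2, pairwise distinct vertices) form a directed cycle in F(σ), i.e., (v_i, v_{i+1}) is an arc of F(σ) for every i (indices mod m). Then there is a sequence of m − 1 swaps along edges of G transforming σ into the configuration σ′ that agrees with σ outside {v_1, …, v_m} and satisfies σ′(v_{i+1}) = σ(v_i) for all i (indices mod m); moreover L(σ′) = L(σ) − m. -/
/-!
Swapping along the edges of the path `v (m - 1), …, v 1, v 0` multiplies `σ` by the inverse of the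
cyclic permutation `τ : v i ↦ v (i + 1)`, so the token on `v i` ends up on `v (i + 1)`. The
distances of two adjacent vertices to a target differ by at most one, so an arc of `F(σ)` brings its
token exactly one step closer. Hence, after reindexing `L(σ * τ⁻¹)` along `τ`, each of the `m` cycle
vertices contributes exactly one less to it than to `L(σ)`.
-/

open Finset

namespace TokenSwapping

section SwapChain

variable {V : Type*}

theorem rel_of_isChain_of_mem_zip_tail {R : V → V → Prop} {c : List V} (hc : c.IsChain R)
    {p : V × V} (hp : p ∈ c.zip c.tail) : R p.1 p.2 := by
  obtain ⟨i, hi, rfl⟩ := List.mem_iff_getElem.1 hp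
  have hi' : i + 1 < c.length := by
    simp only [List.length_zip, List.length_tail] at hi
    omega
  simpa using List.isChain_iff_getElem.1 hc i hi'

variable [DecidableEq V]

theorem prod_map_swap_zip_tail (c : List V) :
    ((c.zip c.tail).map fun p => Equiv.swap p.1 p.2).prod = c.formPerm := by
  rw [List.zip, List.map_zipWith, List.formPerm]

theorem exists_adj_swaps_prod_eq_inv_formPerm {G : SimpleGraph V} {c : List V}
    (hc : c.IsChain G.Adj) :
    ∃ l : List (V × V), l.length = c.length - 1 ∧ (∀ p ∈ l, G.Adj p.1 p.2) ∧
      (l.map fun p => Equiv.swap p.1 p.2).prod = c.formPerm⁻¹ := by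
  have hrev : c.reverse.IsChain G.Adj :=
    List.isChain_reverse.2 (hc.imp fun _ _ h => h.symm)
  refine ⟨c.reverse.zip c.reverse.tail, by simp, fun _ => rel_of_isChain_of_mem_zip_tail hrev, ?_⟩
  rw [prod_map_swap_zip_tail, List.formPerm_reverse]

theorem formPerm_map_range_apply {m : ℕ} {v : ℕ → V} (hv : Set.InjOn v (Set.Iio m))
    {i : ℕ} (hi : i < m) :
    ((List.range m).map v).formPerm (v i) = v ((i + 1) % m) := by
  have hnodup : ((List.range m).map v).Nodup :=
    List.nodup_range.map_on fun a ha b hb => hv (List.mem_range.1 ha) (List.mem_range.1 hb)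
  have hlen : i < ((List.range m).map v).length := by simpa using hi
  simpa only [List.getElem_map, List.getElem_range, List.length_map, List.length_range] using
    List.formPerm_apply_getElem _ hnodup i hlen

end SwapChain

section HappyArcs

variable {V : Type*} {G : SimpleGraph V} {σ : Equiv.Perm V}

/-- The digraph `F(σ)` of moves that bring a token strictly closer to its target. -/
def happyDigraph (G : SimpleGraph V) (σ : Equiv.Perm V) : Digraph V where
  Adj a b := G.Adj a b ∧ G.dist b (σ a) < G.dist a (σ a)

theorem dist_add_one_of_happyDigraph_adj {a b : V} (h : (happyDigraph G σ).Adj a b) :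
    G.dist b (σ a) + 1 = G.dist a (σ a) := by
  obtain ⟨hadj, hlt⟩ := h
  have htri := hadj.reachable.dist_triangle_left (σ a)
  rw [SimpleGraph.dist_eq_one_iff_adj.2 hadj] at htri
  omega

theorem sum_dist_mul_inv_add_card {τ : Equiv.Perm V} {s t : Finset V}
    (hts : t ⊆ s) (hhappy : ∀ x ∈ t, (happyDigraph G σ).Adj x (τ x))
    (hfix : ∀ x ∉ t, τ x = x) :
    ∑ x ∈ s, G.dist x ((σ * τ⁻¹) x) + #t = ∑ x ∈ s, G.dist x (σ x) := by
  classical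
  have hsupp : {x | τ x ≠ x} ⊆ (s : Set V) := fun x hx => hts (not_imp_comm.1 (hfix x) hx)
  calc
    ∑ x ∈ s, G.dist x ((σ * τ⁻¹) x) + #t
        = ∑ x ∈ s, G.dist (τ x) (σ x) + ∑ x ∈ s, if x ∈ t then 1 else 0 := by
      rw [τ.sum_comp' s (fun a b => G.dist a (σ b)) hsupp, sum_boole, filter_mem_eq_inter,
        inter_eq_right.2 hts]
      rfl
    _ = ∑ x ∈ s, G.dist x (σ x) := by
      rw [← sum_add_distrib]
      refine sum_congr rfl fun x _ => ?_
      by_cases hx : x ∈ t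
      · rw [if_pos hx, dist_add_one_of_happyDigraph_adj (hhappy x hx)]
      · rw [if_neg hx, hfix x hx, add_zero]

end HappyArcs

end TokenSwapping

open TokenSwapping

theorem token_swapping_happy_swap_chain_effect_general {V : Type*} [DecidableEq V]
    (G : SimpleGraph V) (σ : Equiv.Perm V) {m : ℕ} (hm : 0 < m) {v : ℕ → V}
    (hinj : Set.InjOn v (Set.Iio m))
    (harc : ∀ i < m, (happyDigraph G σ).Adj (v i) (v ((i + 1) % m))) :
    ∃ (l : List (V × V)) (σ' : Equiv.Perm V),
      l.length + 1 = m ∧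
      (∀ p ∈ l, G.Adj p.1 p.2) ∧
      σ' = σ * (l.map fun p => Equiv.swap p.1 p.2).prod ∧
      (∀ w : V, (∀ i < m, w ≠ v i) → σ' w = σ w) ∧
      (∀ i < m, σ' (v ((i + 1) % m)) = σ (v i)) ∧
      ∀ s : Finset V, (∀ i < m, v i ∈ s) →
        ∑ x ∈ s, G.dist x (σ' x) + m = ∑ x ∈ s, G.dist x (σ x) := by
  set c := (List.range m).map v with hc
  set τ := c.formPerm
  have hτ : ∀ i < m, τ (v i) = v ((i + 1) % m) := fun i => formPerm_map_range_apply hinj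
  have hfix : ∀ w ∉ (range m).image v, τ w = w := fun w hw =>
    List.formPerm_apply_of_notMem (by simpa [hc] using hw)
  have hchain : c.IsChain G.Adj := by
    refine List.isChain_iff_getElem.2 fun i hi => ?_
    have hi : i + 1 < m := by simpa [hc] using hi
    simpa [hc, Nat.mod_eq_of_lt hi] using (harc i (by omega)).1
  obtain ⟨l, hlen, hadj, hprod⟩ := exists_adj_swaps_prod_eq_inv_formPerm hchain
  have hclen : c.length = m := by simp [hc]
  refine ⟨l, σ * τ⁻¹, by omega, hadj, by rw [hprod], fun w hw => ?_, fun i hi => ?_,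
    fun s hs => ?_⟩
  · have hw : τ w = w := hfix w (by simpa [eq_comm] using hw)
    rw [Equiv.Perm.mul_apply, Equiv.Perm.inv_eq_iff_eq.2 hw.symm]
  · rw [← hτ i hi, Equiv.Perm.mul_apply, Equiv.Perm.inv_eq_iff_eq.2 rfl]
  · have hcard : #((range m).image v) = m := by
      rw [card_image_of_injOn (by simpa using hinj), card_range]
    have hsub : (range m).image v ⊆ s := by simpa [image_subset_iff] using hs
    have hhappy : ∀ x ∈ (range m).image v, (happyDigraph G σ).Adj x (τ x) := by
      simpa +contextual [hτ] using harc
    have hsum := sum_dist_mul_inv_add_card hsub hhappy hfix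
    rwa [hcard] at hsum

/-- **Effect of a happy swap chain.** Let `σ` be a configuration on a finite
connected simple graph `G` and let `v 0, …, v (m-1)` (`m ≥ 2`, pairwise distinct) form a
directed cycle in `F(σ)`, i.e. `(v i, v (i+1 mod m))` is an arc of `F(σ)` for every `i < m`
(an arc `(a, b)` of `F(σ)` means `G.Adj a b` and `dist b (σ a) < dist a (σ a)`).
Then there is a sequence of `m − 1` swaps along edges of `G` transforming `σ` into a
configuration `σ'` that agrees with `σ` outside `{v 0, …, v (m-1)}` and satisfies
`σ' (v (i+1 mod m)) = σ (v i)` for all `i < m`; moreover `L(σ') = L(σ) − m`. -/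
theorem token_swapping_happy_swap_chain_effect
    {V : Type*} [Fintype V] [DecidableEq V]
    (G : SimpleGraph V) (hG : G.Connected)
    (σ : Equiv.Perm V) (m : ℕ) (hm : 2 ≤ m) (v : ℕ → V)
    (hinj : ∀ a < m, ∀ b < m, v a = v b → a = b)
    (harc : ∀ i < m, G.Adj (v i) (v ((i + 1) % m)) ∧
      G.dist (v ((i + 1) % m)) (σ (v i)) < G.dist (v i) (σ (v i))) :
    ∃ (l : List (V × V)) (σ' : Equiv.Perm V),
      l.length = m - 1 ∧
      (∀ p ∈ l, G.Adj p.1 p.2) ∧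
      σ' = σ * (l.map fun p => Equiv.swap p.1 p.2).prod ∧
      (∀ w : V, (∀ i < m, w ≠ v i) → σ' w = σ w) ∧
      (∀ i < m, σ' (v ((i + 1) % m)) = σ (v i)) ∧
      (∑ x, G.dist x (σ' x)) + m = ∑ x, G.dist x (σ x) := by
  obtain ⟨l, σ', hlen, hadj, hσ', hout, hcyc, hsum⟩ :=
    token_swapping_happy_swap_chain_effect_general G σ (by omega)
      (fun a ha b hb => hinj a ha b hb) harc
  exact ⟨l, σ', by omega, hadj, hσ', hout, hcyc, hsum univ (by simp)⟩
end

section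
/- (Lemma 3.2) Let σ be a configuration on a finite connected simple graph G with σ not the identity. Then F(σ) contains a directed cycle with pairwise distinct vertices, or there is an unhappy swap available, i.e., an arc (v, w) of F(σ) with σ w = w. -/
/-!
A misplaced token has a shortest path to its target, and its first step is a happy arc. If no happy
arc ends at a vertex whose token is home, the happy arcs chosen this way lead from misplaced tokens
to misplaced tokens only, so following them can never stop, and by finiteness it closes up into a
directed cycle.
-/

namespace TokenSwapping

open Function Set

section DirectedCycle

variable {α : Type*} {r : α → α → Prop} {m : ℕ} {v : ℕ → α} {f : α → α} {s : Set α} {x : α}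

/-- A directed cycle of length `m` in the digraph with arc relation `r`: its vertices `v 0`, …,
`v (m - 1)` are pairwise distinct, and each one is joined by an arc to its cyclic successor. The
values of `v` from `m` on are irrelevant, and `m = 0` is allowed. -/
def IsDirectedCycle (r : α → α → Prop) (m : ℕ) (v : ℕ → α) : Prop :=
  InjOn v (Iio m) ∧ ∀ i < m, r (v i) (v ((i + 1) % m))

theorem IsDirectedCycle.two_le [Std.Irrefl r] (h : IsDirectedCycle r m v) (hm : 0 < m) :
    2 ≤ m := by
  have hm_ne : m ≠ 1 := by
    rintro rfl
    exact irrefl (r := r) (v 0) (h.2 0 hm)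
  lia

theorem isDirectedCycle_iterate_minimalPeriod (h : ∀ n, r (f^[n] x) (f^[n + 1] x)) :
    IsDirectedCycle r (minimalPeriod f x) (f^[·] x) := by
  refine ⟨iterate_injOn_Iio_minimalPeriod, fun i _ ↦ ?_⟩
  simpa only [iterate_mod_minimalPeriod_eq] using h i

theorem exists_mem_periodicPts_of_mapsTo (hs : s.Finite) (hne : s.Nonempty) (hf : MapsTo f s s) :
    ∃ x ∈ s, x ∈ periodicPts f := by
  obtain ⟨x, hx⟩ := hne
  obtain ⟨i, j, hij, heq⟩ := hs.exists_lt_map_eq_of_forall_mem fun n ↦ hf.iterate n hx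
  refine ⟨f^[i] x, hf.iterate i hx, mk_mem_periodicPts (Nat.sub_pos_of_lt hij) ?_⟩
  rw [IsPeriodicPt, IsFixedPt, ← iterate_add_apply, Nat.sub_add_cancel hij.le, heq]

theorem exists_isDirectedCycle_of_forall_exists (hs : s.Finite) (hne : s.Nonempty)
    (h : ∀ x ∈ s, ∃ y ∈ s, r x y) : ∃ m, 0 < m ∧ ∃ v, IsDirectedCycle r m v := by
  choose! f hfs hfr using h
  obtain ⟨x, hx, hper⟩ := exists_mem_periodicPts_of_mapsTo hs hne hfs
  refine ⟨minimalPeriod f x, minimalPeriod_pos_of_mem_periodicPts hper, (f^[·] x),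
    isDirectedCycle_iterate_minimalPeriod fun n ↦ ?_⟩
  rw [iterate_succ_apply']
  exact hfr _ (MapsTo.iterate hfs n hx)

end DirectedCycle

section HappyArc

variable {V : Type*} {G : SimpleGraph V} {u t : V} {σ : V → V}

theorem exists_adj_dist_lt_of_reachable (h : G.Reachable u t) (hne : u ≠ t) :
    ∃ w, G.Adj u w ∧ G.dist w t < G.dist u t := by
  obtain ⟨p, hp⟩ := h.exists_walk_length_eq_dist
  cases p with
  | nil => exact absurd rfl hne
  | cons hadj q =>
    refine ⟨_, hadj, ?_⟩
    rw [← hp, SimpleGraph.Walk.length_cons]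
    exact Nat.lt_succ_of_le (SimpleGraph.dist_le q)

/-- The arc relation of the digraph `F(σ)`: moving along the edge from `v` to `w` brings the token
on `v` closer to its target `σ v`. Several tokens may have the same target, as `σ` is an arbitrary
map. -/
def HappyArc (G : SimpleGraph V) (σ : V → V) (v w : V) : Prop :=
  G.Adj v w ∧ G.dist w (σ v) < G.dist v (σ v)

instance : Std.Irrefl (HappyArc G σ) where
  irrefl _ h := h.1.ne rfl

end HappyArc

end TokenSwapping

open Function TokenSwapping in
theorem token_swapping_happy_cycle_or_unhappy_swap_exists_general
    {V : Type*} {G : SimpleGraph V} {σ : V → V} (hreach : ∀ v, G.Reachable v (σ v))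
    (hfin : (fixedPoints σ)ᶜ.Finite) (hσ : σ ≠ id) :
    (∃ m, 2 ≤ m ∧ ∃ v, IsDirectedCycle (HappyArc G σ) m v) ∨
      ∃ v w, HappyArc G σ v w ∧ σ w = w := by
  rw [or_iff_not_imp_right]
  intro hno_unhappy
  have hmisplaced : (fixedPoints σ)ᶜ.Nonempty := ne_iff.mp hσ
  have hsucc : ∀ v ∈ (fixedPoints σ)ᶜ, ∃ w ∈ (fixedPoints σ)ᶜ, HappyArc G σ v w := by
    intro v hv
    obtain ⟨w, hvw⟩ := exists_adj_dist_lt_of_reachable (hreach v) (Ne.symm hv)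
    exact ⟨w, fun hw ↦ hno_unhappy ⟨v, w, hvw, hw⟩, hvw⟩
  obtain ⟨m, hm, v, hv⟩ := exists_isDirectedCycle_of_forall_exists hfin hmisplaced hsucc
  exact ⟨m, hv.two_le hm, v, hv⟩

/-- **Lemma 3.2.** Let `σ` be a configuration on a finite connected simple
graph `G` with `σ` not the identity.  Then `F(σ)` contains a directed cycle with pairwise
distinct vertices, or there is an unhappy swap available, i.e. an arc `(v, w)` of `F(σ)`
with `σ w = w`.  (An arc `(a, b)` of `F(σ)` means `G.Adj a b` and
`dist b (σ a) < dist a (σ a)`.) -/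
theorem token_swapping_happy_cycle_or_unhappy_swap_exists
    {V : Type*} [Fintype V] [DecidableEq V]
    (G : SimpleGraph V) (hG : G.Connected)
    (σ : Equiv.Perm V) (hσ : σ ≠ 1) :
    (∃ m : ℕ, 2 ≤ m ∧ ∃ v : ℕ → V,
      (∀ a < m, ∀ b < m, v a = v b → a = b) ∧
      ∀ i < m, G.Adj (v i) (v ((i + 1) % m)) ∧
        G.dist (v ((i + 1) % m)) (σ (v i)) < G.dist (v i) (σ (v i))) ∨
    (∃ v w : V, (G.Adj v w ∧ G.dist w (σ v) < G.dist v (σ v)) ∧ σ w = w) :=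
  token_swapping_happy_cycle_or_unhappy_swap_exists_general (fun v ↦ hG v (σ v)) (Set.toFinite _)
    (fun h ↦ hσ (Equiv.coe_fn_injective h))
end

section
/- If G is a finite tree (a finite connected acyclic simple graph), then for every configuration σ, every directed cycle with pairwise distinct vertices in F(σ) has exactly two vertices; consequently, if both (v, w) and (w, v) are arcs of F(σ), then the swap along {v, w} satisfies L(σ ∘ (v w)) = L(σ) − 2. -/
/-! An arc of `F(σ)` is in particular an edge, so a directed cycle on `m ≥ 3` distinct vertices
would embed the cycle graph `C_m` into the acyclic graph `G`. Moving along an edge changes the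
distance to a fixed target by at most one, so a token that gets strictly closer gets closer by
exactly one; a swap along opposite arcs does this for two tokens and leaves the others in place. -/

section

open SimpleGraph

variable {V : Type*} {G : SimpleGraph V} {σ : V → V}

theorem cycleGraph_isContained_of_adj {m : ℕ} {v : ℕ → V} (hinj : Set.InjOn v (Set.Iio m))
    (hadj : ∀ i < m, G.Adj (v i) (v ((i + 1) % m))) : cycleGraph m ⊑ G := by
  have adj_of_val_sub {a b : Fin m} (hab : (b - a).val = 1) : G.Adj (v a) (v b) := by
    have : NeZero m := ⟨a.pos.ne'⟩
    have hb : (b : ℕ) = (a + 1) % m := by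
      rw [← hab, ← Fin.val_add, add_sub_cancel]
    exact hb ▸ hadj a a.isLt
  refine ⟨⟨⟨fun i ↦ v i, fun {a b} hab ↦ ?_⟩, fun a b hab ↦ Fin.ext (hinj a.isLt b.isLt hab)⟩⟩
  exact (cycleGraph_adj'.mp hab).elim (fun h ↦ (adj_of_val_sub h).symm) adj_of_val_sub

theorem le_two_of_isAcyclic_of_cyclically_adj (hG : G.IsAcyclic) {m : ℕ} {v : ℕ → V}
    (hinj : Set.InjOn v (Set.Iio m)) (hadj : ∀ i < m, G.Adj (v i) (v ((i + 1) % m))) : m ≤ 2 := by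
  by_contra! hm
  exact isAcyclic_iff_free_cycleGraph.mp hG m hm (cycleGraph_isContained_of_adj hinj hadj)

/-- The digraph `F(σ)` of moves that bring a token strictly closer to its target. The assignment
`σ` of targets to positions may be any map, so that several tokens may share a target. -/
def progressDigraph (G : SimpleGraph V) (σ : V → V) : Digraph V where
  Adj v w := G.Adj v w ∧ G.dist w (σ v) < G.dist v (σ v)

theorem dist_eq_dist_add_one_of_progressDigraph_adj {v w : V}
    (h : (progressDigraph G σ).Adj v w) : G.dist v (σ v) = G.dist w (σ v) + 1 := by
  obtain ⟨hadj, hlt⟩ := h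
  have hdiff := hadj.diff_dist_adj (u := σ v)
  simp only [G.dist_comm (u := σ v)] at hdiff
  lia

theorem sum_comp_swap_add {α β M : Type*} [DecidableEq α] [AddCommMonoid M] {s : Finset α}
    {a b : α} (ha : a ∈ s) (hb : b ∈ s) (f : α → β → M) (g : α → β) :
    ∑ x ∈ s, f x (g (Equiv.swap a b x)) + (f a (g a) + f b (g b)) =
      ∑ x ∈ s, f x (g x) + (f a (g b) + f b (g a)) := by
  obtain rfl | hab := eq_or_ne a b
  · simp only [Equiv.swap_self, Equiv.refl_apply]
  have hsub : {a, b} ⊆ s := Finset.insert_subset ha (Finset.singleton_subset_iff.mpr hb)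
  have hrest : ∑ x ∈ s \ {a, b}, f x (g (Equiv.swap a b x)) = ∑ x ∈ s \ {a, b}, f x (g x) := by
    refine Finset.sum_congr rfl fun x hx ↦ ?_
    simp only [Finset.mem_sdiff, Finset.mem_insert, Finset.mem_singleton, not_or] at hx
    rw [Equiv.swap_apply_of_ne_of_ne hx.2.1 hx.2.2]
  rw [← Finset.sum_sdiff hsub, ← Finset.sum_sdiff hsub, hrest, Finset.sum_pair hab,
    Finset.sum_pair hab, Equiv.swap_apply_left, Equiv.swap_apply_right, add_right_comm]

theorem sum_dist_comp_swap_add_two [DecidableEq V] {v w : V}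
    (hvw : (progressDigraph G σ).Adj v w) (hwv : (progressDigraph G σ).Adj w v)
    {s : Finset V} (hv : v ∈ s) (hw : w ∈ s) :
    ∑ x ∈ s, G.dist x (σ (Equiv.swap v w x)) + 2 = ∑ x ∈ s, G.dist x (σ x) := by
  have hsum := sum_comp_swap_add hv hw G.dist σ
  have hdistv := dist_eq_dist_add_one_of_progressDigraph_adj hvw
  have hdistw := dist_eq_dist_add_one_of_progressDigraph_adj hwv
  lia

end

theorem token_swapping_tree_cycles_have_length_two_general
    {V : Type*} [DecidableEq V] (G : SimpleGraph V) (σ : V → V) :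
    (G.IsAcyclic → ∀ (m : ℕ) (v : ℕ → V), Set.InjOn v (Set.Iio m) →
      (∀ i < m, (progressDigraph G σ).Adj (v i) (v ((i + 1) % m))) → m ≤ 2) ∧
    (∀ v w : V, (progressDigraph G σ).Adj v w → (progressDigraph G σ).Adj w v →
      ∀ s : Finset V, v ∈ s → w ∈ s →
        ∑ x ∈ s, G.dist x (σ (Equiv.swap v w x)) + 2 = ∑ x ∈ s, G.dist x (σ x)) :=
  ⟨fun hG _ _ hinj harc ↦
    le_two_of_isAcyclic_of_cyclically_adj hG hinj fun i hi ↦ (harc i hi).1,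
    fun _ _ hvw hwv _ hv hw ↦ sum_dist_comp_swap_add_two hvw hwv hv hw⟩

/-- If `G` is a finite tree (a finite connected acyclic simple graph), then
for every configuration `σ`, every directed cycle with pairwise distinct vertices in `F(σ)`
has exactly two vertices; consequently, if both `(v, w)` and `(w, v)` are arcs of `F(σ)`,
then the swap along `{v, w}` satisfies `L(σ ∘ (v w)) = L(σ) − 2`.
(An arc `(a, b)` of `F(σ)` means `G.Adj a b` and `dist b (σ a) < dist a (σ a)`;
`L(σ) = Σ_{x ∈ V} dist_G(x, σ x)`.) -/
theorem token_swapping_tree_cycles_have_length_two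
    {V : Type*} [Fintype V] [DecidableEq V]
    (G : SimpleGraph V) (hT : G.IsTree) (σ : Equiv.Perm V) :
    (∀ m : ℕ, 2 ≤ m → ∀ v : ℕ → V,
      (∀ a < m, ∀ b < m, v a = v b → a = b) →
      (∀ i < m, G.Adj (v i) (v ((i + 1) % m)) ∧
        G.dist (v ((i + 1) % m)) (σ (v i)) < G.dist (v i) (σ (v i))) →
      m = 2) ∧
    (∀ v w : V,
      (G.Adj v w ∧ G.dist w (σ v) < G.dist v (σ v)) →
      (G.Adj w v ∧ G.dist v (σ w) < G.dist w (σ w)) →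
      (∑ x, G.dist x ((σ * Equiv.swap v w) x)) + 2 = ∑ x, G.dist x (σ x)) := by
  obtain ⟨hcycle, hswap⟩ := token_swapping_tree_cycles_have_length_two_general G σ
  exact ⟨fun m hm v hinj harc ↦
      (hcycle hT.isAcyclic m v (fun a ha b hb ↦ hinj a ha b hb) harc).antisymm hm,
    fun v w hvw hwv ↦ hswap v w hvw hwv Finset.univ (Finset.mem_univ v) (Finset.mem_univ w)⟩
end

section
/- (Lemma 3.3) Consider a sequence of operations starting from a configuration σ on a finite connected simple graph G, in which every operation is a happy swap chain or an unhappy swap with respect to the current configuration. If some operation is an unhappy swap along an edge {v, w} (so that at that moment the token whose target vertex is w sits on w and is moved off w to v), then the first subsequent swap in the sequence that involves that token, if any, is a happy swap, i.e., a swap performed as part of a happy swap chain. -/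
/-- An arc of the auxiliary digraph `F(σ)`: `(v, w)` is an arc when `{v, w}` is an edge of
`G` and the token on `v` gets strictly closer to its target by moving to `w`. -/
def TokenSwap.FArc {V : Type*} (G : SimpleGraph V) (σ : Equiv.Perm V) (v w : V) : Prop :=
  G.Adj v w ∧ G.dist w (σ v) < G.dist v (σ v)

/-- The swap performed at time `j` (along the edge `e j`, in configuration `τ j`) is an
unhappy swap: `(e j).1 → (e j).2` is an arc of `F(τ j)` and the token on `(e j).2` is on
its target vertex. -/
def TokenSwap.UnhappyAt {V : Type*} (G : SimpleGraph V)
    (τ : ℕ → Equiv.Perm V) (e : ℕ → V × V) (j : ℕ) : Prop :=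
  TokenSwap.FArc G (τ j) (e j).1 (e j).2 ∧ τ j (e j).2 = (e j).2

/-- The `m − 1` swaps performed at times `j, j+1, …, j+m-2` form a happy swap chain for the
configuration `τ j`: there is a directed cycle `v 0, …, v (m-1)` (`m ≥ 2`, pairwise distinct
vertices) in `F(τ j)`, and the swaps are performed along its edges in the order
`(v (m-2), v (m-1)), …, (v 0, v 1)`, after which the token formerly on `v i` is on
`v (i+1 mod m)`. -/
def TokenSwap.HappyChainAt {V : Type*} (G : SimpleGraph V)
    (τ : ℕ → Equiv.Perm V) (e : ℕ → V × V) (j m : ℕ) : Prop :=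
  2 ≤ m ∧ ∃ v : ℕ → V,
    (∀ a < m, ∀ b < m, v a = v b → a = b) ∧
    (∀ i < m, TokenSwap.FArc G (τ j) (v i) (v ((i + 1) % m))) ∧
    (∀ i < m - 1, e (j + i) = (v (m - 2 - i), v (m - 1 - i)))

/-!
Just after the unhappy swap the displaced token sits on a neighbour of its target, and it stays
there until it is next involved in a swap. An unhappy swap moves one token already on its target
and one token closer to its own. If the displaced token were moved by an unhappy swap, it would be
the latter and, being at distance one, would reach its target; but then the token it is exchanged
with would be on that same target, hence would be the displaced token itself.
-/

namespace TokenSwap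

/-- The swap performed at time `j` involves the token `t`, i.e. `t` is on an endpoint of `e j` in
the configuration `τ j` before the swap. -/
def InvolvesAt {V : Type*} (τ : ℕ → Equiv.Perm V) (e : ℕ → V × V) (j : ℕ) (t : V) : Prop :=
  τ j (e j).1 = t ∨ τ j (e j).2 = t

variable {V : Type*} {G : SimpleGraph V} {τ : ℕ → Equiv.Perm V} {e : ℕ → V × V}

theorem FArc.eq_apply_of_adj {σ : Equiv.Perm V} {v w : V} (h : FArc G σ v w)
    (hv : G.Adj v (σ v)) : w = σ v := by
  have hreach : G.Reachable w (σ v) := h.1.symm.reachable.trans hv.reachable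
  have hlt : G.dist w (σ v) < 1 := SimpleGraph.dist_eq_one_iff_adj.mpr hv ▸ h.2
  exact hreach.dist_eq_zero_iff.mp (Nat.lt_one_iff.mp hlt)

theorem UnhappyAt.not_adj_of_involvesAt {j : ℕ} {x : V} (h : UnhappyAt G τ e j)
    (hx : InvolvesAt τ e j (τ j x)) : ¬ G.Adj x (τ j x) := by
  obtain ⟨harc, hfixed⟩ := h
  intro hadj
  rcases hx with hx | hx <;> obtain rfl := (τ j).injective hx
  · have htarget : (e j).2 = τ j (e j).1 := harc.eq_apply_of_adj hadj
    exact harc.1.ne ((τ j).injective (htarget.symm.trans hfixed.symm))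
  · exact hadj.ne hfixed.symm

variable [DecidableEq V]

theorem apply_eq_of_forall_not_involvesAt {a b : ℕ} {x t : V} (hab : a ≤ b)
    (hτ : ∀ k, a ≤ k → k < b → τ (k + 1) = τ k * Equiv.swap (e k).1 (e k).2)
    (hidle : ∀ k, a ≤ k → k < b → ¬ InvolvesAt τ e k t) (hx : τ a x = t) : τ b x = t := by
  induction b, hab using Nat.le_induction with
  | base => exact hx
  | succ k hak ih =>
    have hkx : τ k x = t :=
      ih (fun i hi hik ↦ hτ i hi (hik.trans k.lt_succ_self))
        (fun i hi hik ↦ hidle i hi (hik.trans k.lt_succ_self))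
    have hk : ¬ InvolvesAt τ e k t := hidle k hak k.lt_succ_self
    have hne₁ : x ≠ (e k).1 := fun h ↦ hk (.inl (h ▸ hkx))
    have hne₂ : x ≠ (e k).2 := fun h ↦ hk (.inr (h ▸ hkx))
    rw [hτ k hak k.lt_succ_self, Equiv.Perm.mul_apply, Equiv.swap_apply_of_ne_of_ne hne₁ hne₂, hkx]

theorem UnhappyAt.not_unhappyAt_of_involvesAt {j j' : ℕ} (h : UnhappyAt G τ e j) (hjj' : j < j')
    (hτ : ∀ k, j ≤ k → k < j' → τ (k + 1) = τ k * Equiv.swap (e k).1 (e k).2)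
    (hinv : InvolvesAt τ e j' (e j).2)
    (hfirst : ∀ k, j < k → k < j' → ¬ InvolvesAt τ e k (e j).2) : ¬ UnhappyAt G τ e j' := by
  have hmoved : τ (j + 1) (e j).1 = (e j).2 := by
    rw [hτ j le_rfl hjj', Equiv.Perm.mul_apply, Equiv.swap_apply_left, h.2]
  have hstay : τ j' (e j).1 = (e j).2 :=
    apply_eq_of_forall_not_involvesAt hjj' (fun k hk ↦ hτ k (Nat.le_of_lt hk)) hfirst hmoved
  intro h'
  exact h'.not_adj_of_involvesAt (hstay.symm ▸ hinv) (hstay.symm ▸ h.1.1)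

end TokenSwap

theorem token_swapping_after_unhappy_swap_next_swap_is_happy_general
    {V : Type*} [DecidableEq V] (G : SimpleGraph V)
    (N : ℕ) (e : ℕ → V × V) (τ : ℕ → Equiv.Perm V) (happy : ℕ → Bool)
    (hτ : ∀ j < N, τ (j + 1) = τ j * Equiv.swap (e j).1 (e j).2)
    (B : ℕ) (c : ℕ → ℕ) (hc0 : c 0 = 0) (hcB : c B = N)
    (hblocks : ∀ i < B,
      (c (i + 1) = c i + 1 ∧ TokenSwap.UnhappyAt G τ e (c i) ∧ happy (c i) = false) ∨
      (∃ m, TokenSwap.HappyChainAt G τ e (c i) m ∧ c (i + 1) = c i + (m - 1) ∧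
        ∀ j, c i ≤ j → j < c (i + 1) → happy j = true))
    (j : ℕ) (hjunhappy : happy j = false) (j' : ℕ) (hjj' : j < j') (hj' : j' < N)
    (hinv : TokenSwap.InvolvesAt τ e j' (e j).2)
    (hfirst : ∀ k, j < k → k < j' → ¬ TokenSwap.InvolvesAt τ e k (e j).2) :
    happy j' = true := by
  have hunhappy : ∀ k < N, happy k = false → TokenSwap.UnhappyAt G τ e k := by
    intro k hk hfalse
    have hcover : k ∈ ⋃ i ∈ Finset.range B, Set.Ico (c i) (c (i + 1)) :=
      Ico_subset_biUnion_Ico B c ⟨hc0.trans_le k.zero_le, hcB ▸ hk⟩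
    simp only [Set.mem_iUnion, Finset.mem_range] at hcover
    obtain ⟨i, hi, hik, hki⟩ := hcover
    rcases hblocks i hi with ⟨hlen, hun, -⟩ | ⟨-, -, -, hhappy⟩
    · obtain rfl : k = c i := by omega
      exact hun
    · simp [hhappy k hik hki] at hfalse
  by_contra hne
  exact (hunhappy j (hjj'.trans hj') hjunhappy).not_unhappyAt_of_involvesAt hjj'
    (fun k _ hk ↦ hτ k (hk.trans hj')) hinv hfirst
    (hunhappy j' hj' (Bool.eq_false_of_not_eq_true hne))

/-- **Lemma 3.3.** Consider a sequence of `N` swaps along edges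
`e 0, …, e (N-1)`, with intermediate configurations `τ 0 = σ, τ 1, …, τ N` on a finite
connected simple graph `G`, which decomposes into consecutive blocks (with starting indices
`c 0 = 0 < c 1 < … < c B = N`), each block being either a single unhappy swap (marked
`happy = false`) or a happy swap chain (all of its swaps marked `happy = true`), with
respect to the configuration current at the start of the block.

If the swap at time `j` is an unhappy swap along the edge `{v, w} = e j` (so that at that
moment the token whose target vertex is `w = (e j).2` sits on `w` and is moved off `w` to
`v`), then the first subsequent swap in the sequence that involves that token, if any, is a
happy swap, i.e. a swap performed as part of a happy swap chain. -/
theorem token_swapping_after_unhappy_swap_next_swap_is_happy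
    {V : Type*} [Fintype V] [DecidableEq V]
    (G : SimpleGraph V) (hG : G.Connected)
    (σ : Equiv.Perm V) (N : ℕ) (e : ℕ → V × V) (τ : ℕ → Equiv.Perm V)
    (happy : ℕ → Bool)
    (hτ0 : τ 0 = σ)
    (hτ : ∀ j < N, τ (j + 1) = τ j * Equiv.swap (e j).1 (e j).2)
    (B : ℕ) (c : ℕ → ℕ) (hc0 : c 0 = 0) (hcB : c B = N)
    (hblocks : ∀ i < B,
      (c (i + 1) = c i + 1 ∧ TokenSwap.UnhappyAt G τ e (c i) ∧ happy (c i) = false) ∨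
      (∃ m, TokenSwap.HappyChainAt G τ e (c i) m ∧ c (i + 1) = c i + (m - 1) ∧
        ∀ j, c i ≤ j → j < c (i + 1) → happy j = true))
    -- the unhappy swap at time `j`:
    (j : ℕ) (hj : j < N) (hjstart : ∃ i < B, c i = j)
    (hjunhappy : happy j = false)
    -- `j'` is the first subsequent time whose swap involves the token `(e j).2`:
    (j' : ℕ) (hj'1 : j < j') (hj'2 : j' < N)
    (hinv : τ j' ((e j').1) = (e j).2 ∨ τ j' ((e j').2) = (e j).2)
    (hfirst : ∀ j'', j < j'' → j'' < j' →
      ¬(τ j'' ((e j'').1) = (e j).2 ∨ τ j'' ((e j'').2) = (e j).2)) :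
    happy j' = true :=
  token_swapping_after_unhappy_swap_next_swap_is_happy_general G N e τ happy hτ B c hc0 hcB hblocks
    j hjunhappy j' hj'1 hj'2 hinv hfirst
end

section
/- (Theorem 3.4, general graphs) Let σ be a configuration on a finite connected simple graph G and suppose a sequence of operations, each a happy swap chain or an unhappy swap with respect to the current configuration, transforms σ into the identity. Then the total number of swaps performed is at most 2·L(σ); in particular, it is at most 4 times the minimum number of swaps along edges of G needed to sort σ. -/
/-!
Give a token at distance `d` from its target the weight `2 * d`, lowered to `1` when `d = 1`, and
let the potential be the sum of all weights. Moving a token strictly closer to its target lowers its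
weight by at least `1`, and by at least `2` if it does not arrive. A happy swap chain on a cycle of
length `m` moves `m` tokens closer, so its `m - 1` swaps lower the potential by at least `m`. In an
unhappy swap the advancing token does not arrive, since the token on the other end is the one whose
target is there, and the displaced token gains weight only `1`; so the potential drops. Hence the
number of swaps is at most the potential, which is at most `2 * L(σ)`. Conversely a single swap
changes `L` by at most `2`, so sorting `σ` requires at least `L(σ) / 2` swaps.
-/

namespace TokenSwap

open Equiv Equiv.Perm

variable {V : Type*} {G : SimpleGraph V}

theorem reachable_swap_apply [DecidableEq V] {v w : V} (h : G.Reachable v w) (x : V) :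
    G.Reachable x (swap v w x) := by
  rw [swap_apply_def]
  split_ifs with hv hw
  · exact hv ▸ h
  · exact hw ▸ h.symm
  · rfl

theorem FArc.dist_ne_zero_of_apply_eq {σ : Perm V} {v w : V} (h : FArc G σ v w)
    (hw : σ w = w) : G.dist w (σ v) ≠ 0 := by
  have hreach : G.Reachable v (σ v) := .of_dist_ne_zero h.2.ne_bot
  exact SimpleGraph.dist_ne_zero_iff_ne_and_reachable.mpr
    ⟨fun hwv => h.1.ne' (σ.injective (hw.trans hwv)), h.1.symm.reachable.trans hreach⟩

section Configuration

variable [Fintype V]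

/-- The quantity `L(σ)`: the sum of the distances of all tokens from their targets.
Tokens whose target lies in another component contribute the junk distance `0`. -/
noncomputable def totalDist (G : SimpleGraph V) (σ : Perm V) : ℕ :=
  ∑ x, G.dist x (σ x)

@[simp]
theorem totalDist_one : totalDist G 1 = 0 := by
  simp [totalDist]

theorem totalDist_mul_le {π : Perm V} (hπ : ∀ x, G.Reachable x (π x)) (ρ : Perm V) :
    totalDist G (π * ρ) ≤ totalDist G π + totalDist G ρ :=
  calc ∑ x, G.dist x (π (ρ x))
      ≤ ∑ x, (G.dist x (ρ x) + G.dist (ρ x) (π (ρ x))) :=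
        Finset.sum_le_sum fun x _ => (hπ (ρ x)).dist_triangle_right x
    _ = totalDist G ρ + totalDist G π := by
        rw [Finset.sum_add_distrib, Equiv.sum_comp ρ fun y => G.dist y (π y)]
        rfl
    _ = totalDist G π + totalDist G ρ := Nat.add_comm _ _

/-- The contribution to the potential of a token at distance `d` from its target. The exceptional
value at `d = 1` makes displacing a token from its target cost only `1`. -/
def weight (d : ℕ) : ℕ :=
  if d = 1 then 1 else 2 * d

@[simp]
theorem weight_one : weight 1 = 1 := rfl

theorem weight_le_two_mul (d : ℕ) : weight d ≤ 2 * d := by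
  grind [weight]

theorem weight_strictMono : StrictMono weight := by
  intro a b hab
  grind [weight]

theorem weight_add_two_le {a b : ℕ} (ha : a ≠ 0) (hab : a < b) : weight a + 2 ≤ weight b := by
  grind [weight]

/-- The potential of a configuration: the sum of the weights of its tokens. -/
noncomputable def potential (G : SimpleGraph V) (σ : Perm V) : ℕ :=
  ∑ x, weight (G.dist x (σ x))

theorem potential_le_two_mul_totalDist (σ : Perm V) : potential G σ ≤ 2 * totalDist G σ := by
  rw [potential, totalDist, Finset.mul_sum]
  exact Finset.sum_le_sum fun x _ => weight_le_two_mul _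

/-- The configuration `σ * γ⁻¹` arises from `σ` by moving the token on each `x` to `γ x`. -/
theorem potential_mul_inv (σ γ : Perm V) :
    potential G (σ * γ⁻¹) = ∑ x, weight (G.dist (γ x) (σ x)) := by
  rw [potential, ← Equiv.sum_comp γ]
  simp only [Perm.mul_apply, Perm.inv_def, symm_apply_apply]

end Configuration

section Swap

variable [Fintype V] [DecidableEq V]

theorem totalDist_swap (v w : V) : totalDist G (swap v w) = 2 * G.dist v w :=
  calc ∑ x, G.dist x (swap v w x)
      = ∑ x, ((if x = v then G.dist v w else 0) + if x = w then G.dist v w else 0) := by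
        refine Finset.sum_congr rfl fun x _ => ?_
        have hcomm : G.dist w v = G.dist v w := SimpleGraph.dist_comm
        grind
    _ = 2 * G.dist v w := by simp [Finset.sum_add_distrib, two_mul]

theorem totalDist_prod_swap_le (l : List (V × V)) (hl : ∀ p ∈ l, G.Adj p.1 p.2) :
    totalDist G (l.map fun p => swap p.1 p.2).prod ≤ 2 * l.length := by
  induction l with
  | nil => simp
  | cons p l ih =>
    obtain ⟨hp, hl⟩ := List.forall_mem_cons.mp hl
    rw [List.map_cons, List.prod_cons, List.length_cons]
    have htriangle := totalDist_mul_le (reachable_swap_apply hp.reachable)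
      (l.map fun p => swap p.1 p.2).prod
    rw [totalDist_swap, SimpleGraph.dist_eq_one_iff_adj.mpr hp] at htriangle
    linarith [ih hl]

theorem potential_mul_inv_add_card_support_le {σ γ : Perm V}
    (h : ∀ x ∈ γ.support, FArc G σ x (γ x)) :
    potential G (σ * γ⁻¹) + γ.support.card ≤ potential G σ :=
  calc potential G (σ * γ⁻¹) + γ.support.card
      = ∑ x, (weight (G.dist (γ x) (σ x)) + if x ∈ γ.support then 1 else 0) := by
        rw [potential_mul_inv, Finset.sum_add_distrib, Finset.sum_boole, Finset.filter_univ_mem,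
          Nat.cast_id]
    _ ≤ ∑ x, weight (G.dist x (σ x)) := by
        refine Finset.sum_le_sum fun x _ => ?_
        split_ifs with hx
        · exact weight_strictMono (h x hx).2
        · rw [notMem_support.mp hx, add_zero]

theorem potential_mul_swap_lt {σ : Perm V} {v w : V} (h : FArc G σ v w) (hw : σ w = w) :
    potential G (σ * swap v w) < potential G σ := by
  have hadvance := weight_add_two_le (h.dist_ne_zero_of_apply_eq hw) h.2
  have hdisplaced : G.dist v w = 1 := SimpleGraph.dist_eq_one_iff_adj.mpr h.1
  have hle : ∀ x, weight (G.dist (swap v w x) (σ x)) + (if x = v then 2 else 0) ≤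
      weight (G.dist x (σ x)) + if x = w then 1 else 0 := by
    intro x
    rcases eq_or_ne x v with rfl | hxv
    · simpa [h.1.ne] using hadvance
    rcases eq_or_ne x w with rfl | hxw
    · simp [hw, hxv, hdisplaced]
    · simp [swap_apply_of_ne_of_ne hxv hxw, hxv, hxw]
  suffices potential G (σ * swap v w) + 2 ≤ potential G σ + 1 by omega
  calc potential G (σ * swap v w) + 2
      = ∑ x, (weight (G.dist (swap v w x) (σ x)) + if x = v then 2 else 0) := by
        simp [← potential_mul_inv, Finset.sum_add_distrib]
    _ ≤ ∑ x, (weight (G.dist x (σ x)) + if x = w then 1 else 0) :=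
        Finset.sum_le_sum fun x _ => hle x
    _ = potential G σ + 1 := by simp [potential, Finset.sum_add_distrib]

end Swap

section Run

variable [DecidableEq V] {τ : ℕ → Perm V} {e : ℕ → V × V} {j m : ℕ}

theorem eq_mul_inv_formPerm_of_forall_swap {π : ℕ → Perm V} {v : ℕ → V} {n : ℕ}
    (hπ : ∀ i < n, π (i + 1) = π i * swap (v (n - (i + 1))) (v (n - i))) :
    π n = π 0 * (((List.range (n + 1)).map v).formPerm)⁻¹ := by
  suffices ∀ i ≤ n, π i = π 0 * (((List.range' (n - i) (i + 1)).map v).formPerm)⁻¹ by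
    simpa [List.range_eq_range'] using this n le_rfl
  intro i hi
  induction i with
  | zero => simp
  | succ i ih =>
    have hpred : n - i = n - (i + 1) + 1 := by omega
    rw [hπ i hi, ih (by omega), hpred]
    simp only [List.range'_succ, List.map_cons, List.formPerm_cons_cons, mul_inv_rev, swap_inv,
      mul_assoc]

theorem HappyChainAt.exists_eq_mul_inv [Fintype V] (h : HappyChainAt G τ e j m)
    (hτ : ∀ i < m - 1, τ (j + i + 1) = τ (j + i) * swap (e (j + i)).1 (e (j + i)).2) :
    ∃ γ : Perm V, γ.support.card = m ∧ (∀ x ∈ γ.support, FArc G (τ j) x (γ x)) ∧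
      τ (j + (m - 1)) = τ j * γ⁻¹ := by
  obtain ⟨hm, v, hinj, harc, he⟩ := h
  have hnodup : ((List.range m).map v).Nodup :=
    List.nodup_range.map_on fun a ha b hb =>
      hinj a (List.mem_range.mp ha) b (List.mem_range.mp hb)
  refine ⟨((List.range m).map v).formPerm, ?_, fun x hx => ?_, ?_⟩
  · have hne_singleton : ∀ x, (List.range m).map v ≠ [x] := fun x hx => by
      have hlength : m = 1 := by simpa using congrArg List.length hx
      omega
    rw [List.support_formPerm_of_nodup _ hnodup hne_singleton,
      List.toFinset_card_of_nodup hnodup, List.length_map, List.length_range]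
  · obtain ⟨i, hi, rfl⟩ := List.mem_map.mp (List.mem_of_formPerm_apply_ne (mem_support.mp hx))
    have happly := List.formPerm_apply_getElem _ hnodup i (by simpa using hi)
    simp only [List.getElem_map, List.getElem_range, List.length_map, List.length_range] at happly
    exact happly ▸ harc i (List.mem_range.mp hi)
  · obtain ⟨n, rfl⟩ : ∃ n, m = n + 1 := ⟨m - 1, by omega⟩
    refine eq_mul_inv_formPerm_of_forall_swap (n := n) (π := fun i => τ (j + i)) fun i hi => ?_
    have htail : n + 1 - 2 - i = n - (i + 1) := by omega
    simpa only [he i hi, htail, Nat.add_sub_cancel] using! hτ i hi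

theorem HappyChainAt.potential_add_le [Fintype V] (h : HappyChainAt G τ e j m)
    (hτ : ∀ i < m - 1, τ (j + i + 1) = τ (j + i) * swap (e (j + i)).1 (e (j + i)).2) :
    potential G (τ (j + (m - 1))) + m ≤ potential G (τ j) := by
  obtain ⟨γ, hcard, harc, hγ⟩ := h.exists_eq_mul_inv hτ
  exact hγ ▸ hcard ▸ potential_mul_inv_add_card_support_le harc

theorem add_potential_le_of_blocks [Fintype V] {c : ℕ → ℕ} {B : ℕ}
    (hτ : ∀ j < c B, τ (j + 1) = τ j * swap (e j).1 (e j).2)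
    (hblocks : ∀ i < B,
      (c (i + 1) = c i + 1 ∧ UnhappyAt G τ e (c i)) ∨
      (∃ m, HappyChainAt G τ e (c i) m ∧ c (i + 1) = c i + (m - 1))) :
    c B + potential G (τ (c B)) ≤ c 0 + potential G (τ (c 0)) := by
  induction B with
  | zero => rfl
  | succ B ih =>
    have hinit (hle : c B ≤ c (B + 1)) :=
      ih (fun j hj => hτ j (hj.trans_le hle)) fun i hi => hblocks i (by omega)
    rcases hblocks B (by omega) with ⟨hc, harc, hhome⟩ | ⟨m, hchain, hc⟩
    · have hlast := potential_mul_swap_lt harc hhome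
      rw [← hτ (c B) (by omega), ← hc] at hlast
      have := hinit (by omega)
      omega
    · have hlast := hchain.potential_add_le fun i hi => hτ (c B + i) (by omega)
      rw [← hc] at hlast
      have := hinit (by omega)
      omega

end Run

end TokenSwap

theorem token_swapping_happy_unhappy_algorithm_four_approximation_general
    {V : Type*} [Fintype V] [DecidableEq V]
    (G : SimpleGraph V)
    (σ : Equiv.Perm V) (N : ℕ) (e : ℕ → V × V) (τ : ℕ → Equiv.Perm V)
    (hτ0 : τ 0 = σ)
    (hτ : ∀ j < N, τ (j + 1) = τ j * Equiv.swap (e j).1 (e j).2)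
    (B : ℕ) (c : ℕ → ℕ) (hc0 : c 0 = 0) (hcB : c B = N)
    (hblocks : ∀ i < B,
      (c (i + 1) = c i + 1 ∧ TokenSwap.UnhappyAt G τ e (c i)) ∨
      (∃ m, TokenSwap.HappyChainAt G τ e (c i) m ∧ c (i + 1) = c i + (m - 1))) :
    N ≤ 2 * ∑ x, G.dist x (σ x) ∧
    ∀ (k : ℕ) (l : List (V × V)), l.length = k → (∀ p ∈ l, G.Adj p.1 p.2) →
      σ = (l.map fun p => Equiv.swap p.1 p.2).prod → N ≤ 4 * k := by
  have hL : N ≤ 2 * TokenSwap.totalDist G σ :=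
    calc N ≤ N + TokenSwap.potential G (τ N) := Nat.le_add_right _ _
      _ ≤ TokenSwap.potential G σ := by
          simpa only [hc0, hcB, hτ0, zero_add] using
            TokenSwap.add_potential_le_of_blocks (hcB.symm ▸ hτ) hblocks
      _ ≤ 2 * TokenSwap.totalDist G σ := TokenSwap.potential_le_two_mul_totalDist σ
  refine ⟨hL, ?_⟩
  rintro k l rfl hl rfl
  linarith [TokenSwap.totalDist_prod_swap_le l hl]

/-- **Theorem 3.4, general graphs.** Let `σ` be a configuration on a finite
connected simple graph `G` and suppose a sequence of `N` swaps along edges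
`e 0, …, e (N-1)`, with intermediate configurations `τ 0 = σ, τ 1, …, τ N`, decomposing
into consecutive blocks (with starting indices `c 0 = 0 < c 1 < … < c B = N`), each block
a happy swap chain or an unhappy swap with respect to the configuration current at the
start of the block, transforms `σ` into the identity.  Then the total number `N` of swaps
performed is at most `2·L(σ)` where `L(σ) = Σ_{x ∈ V} dist_G(x, σ x)`; in particular, it is
at most `4` times the minimum number of swaps along edges of `G` needed to sort `σ`. -/
theorem token_swapping_happy_unhappy_algorithm_four_approximation
    {V : Type*} [Fintype V] [DecidableEq V]
    (G : SimpleGraph V) (hG : G.Connected)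
    (σ : Equiv.Perm V) (N : ℕ) (e : ℕ → V × V) (τ : ℕ → Equiv.Perm V)
    (hτ0 : τ 0 = σ)
    (hτ : ∀ j < N, τ (j + 1) = τ j * Equiv.swap (e j).1 (e j).2)
    (hτN : τ N = 1)
    (B : ℕ) (c : ℕ → ℕ) (hc0 : c 0 = 0) (hcB : c B = N)
    (hblocks : ∀ i < B,
      (c (i + 1) = c i + 1 ∧ TokenSwap.UnhappyAt G τ e (c i)) ∨
      (∃ m, TokenSwap.HappyChainAt G τ e (c i) m ∧ c (i + 1) = c i + (m - 1))) :
    N ≤ 2 * ∑ x, G.dist x (σ x) ∧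
    ∀ (k : ℕ) (l : List (V × V)), l.length = k → (∀ p ∈ l, G.Adj p.1 p.2) →
      σ = (l.map fun p => Equiv.swap p.1 p.2).prod → N ≤ 4 * k :=
  token_swapping_happy_unhappy_algorithm_four_approximation_general
    G σ N e τ hτ0 hτ B c hc0 hcB hblocks
end

section
/- (4-approximation, existence form) Every configuration σ on a finite connected simple graph G can be sorted by at most 2·L(σ) swaps along edges of G; consequently, the minimum number of swaps needed to sort σ lies between L(σ)/2 and 2·L(σ). -/
/-!
Upper bound: transposing the ends of a walk of length `d` takes at most `2d` swaps.  If `σ` moves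
`p` to `x = σ p`, then `swap x (σ x) * σ` fixes `x` and differs from `σ` elsewhere only at `p`.
Repeating this shortens the cycle of `p` one vertex at a time, paying `2 * dist x (σ x)` for each
vertex `x` removed; the cycle is exhausted before the displacement of `p` itself, the only one that
changes, has to be paid for.

Lower bound: a swap moves only two tokens, each by distance one.
-/

section

open Equiv

variable {V : Type*} [DecidableEq V] {G : SimpleGraph V}

/-- The configuration `σ` can be sorted by at most `n` swaps along edges of `G`: it is the product
of a list of at most `n` such swaps, each encoded as the ordered pair of its endpoints.  Counting
only up to an upper bound makes the notion monotone in `n`. -/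
def SortableWithin (G : SimpleGraph V) (σ : Perm V) (n : ℕ) : Prop :=
  ∃ l : List (V × V), l.length ≤ n ∧ (∀ p ∈ l, G.Adj p.1 p.2) ∧
    σ = (l.map fun p => swap p.1 p.2).prod

namespace SortableWithin

variable {σ τ : Perm V} {m n : ℕ}

theorem mono (h : SortableWithin G σ m) (hmn : m ≤ n) : SortableWithin G σ n := by
  obtain ⟨l, hlen, hl⟩ := h
  exact ⟨l, hlen.trans hmn, hl⟩

theorem one (G : SimpleGraph V) (n : ℕ) : SortableWithin G 1 n :=
  ⟨[], by simp⟩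

theorem mul (hσ : SortableWithin G σ m) (hτ : SortableWithin G τ n) :
    SortableWithin G (σ * τ) (m + n) := by
  obtain ⟨l, hlen, hl, rfl⟩ := hσ
  obtain ⟨l', hlen', hl', rfl⟩ := hτ
  refine ⟨l ++ l', ?_, List.forall_mem_append.2 ⟨hl, hl'⟩, by simp⟩
  rw [List.length_append]
  exact add_le_add hlen hlen'

theorem swap_of_adj {u v : V} (h : G.Adj u v) : SortableWithin G (swap u v) 1 :=
  ⟨[(u, v)], by simp [h]⟩

theorem swap_of_walk {u v : V} (p : G.Walk u v) :
    SortableWithin G (swap u v) (2 * p.length) := by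
  induction p with
  | nil =>
    rw [swap_self]
    exact one G _
  | @cons u v w h p ih =>
    rw [SimpleGraph.Walk.length_cons]
    rcases eq_or_ne w u with rfl | hwu
    · rw [swap_self]
      exact one G _
    rcases eq_or_ne w v with rfl | hwv
    · exact (swap_of_adj h).mono (by omega)
    have conj : swap u v * swap v w * swap u v = swap u w := by
      rw [swap_comm u v, swap_comm v w, swap_mul_swap_mul_swap hwv hwu]
    rw [← conj]
    exact (((swap_of_adj h).mul ih).mul (swap_of_adj h)).mono (by omega)

theorem swap_of_reachable {u v : V} (h : G.Reachable u v) :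
    SortableWithin G (swap u v) (2 * G.dist u v) := by
  obtain ⟨p, hp⟩ := h.exists_walk_length_eq_dist
  exact hp ▸ swap_of_walk p

end SortableWithin

-- The one moved vertex allowed outside `s` is the vertex `p` whose displacement is not paid for;
-- the bound with all moved vertices in `s` would not survive the induction.
theorem sortableWithin_of_subsingleton_moved_notMem {s : Finset V} {σ : Perm V}
    (hmoved : {x | σ x ≠ x ∧ x ∉ s}.Subsingleton) (hreach : ∀ x ∈ s, G.Reachable x (σ x)) :
    SortableWithin G σ (2 * ∑ x ∈ s, G.dist x (σ x)) := by
  induction s using Finset.strongInduction generalizing σ with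
  | H s ih =>
    by_cases hp : ∃ p, σ p ≠ p ∧ p ∉ s
    · obtain ⟨p, hσp, hps⟩ := hp
      set x := σ p
      have hσx : σ x ≠ x := σ.injective.ne hσp
      have hxs : x ∈ s := by
        by_contra hxs
        exact hσp (hmoved ⟨hσx, hxs⟩ ⟨hσp, hps⟩)
      set τ := swap x (σ x) * σ with hτ
      have hagree : ∀ z ∈ s.erase x, τ z = σ z := fun z hz =>
        have hzp : z ≠ p := ne_of_mem_of_not_mem (Finset.mem_of_mem_erase hz) hps
        swap_apply_of_ne_of_ne (σ.injective.ne hzp) (σ.injective.ne (Finset.ne_of_mem_erase hz))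
      have hmovedτ : {z | τ z ≠ z ∧ z ∉ s.erase x}.Subsingleton := by
        refine hmoved.anti fun z ⟨hτz, hz⟩ => ?_
        obtain ⟨hσz, hzx⟩ := Perm.ne_and_ne_of_swap_mul_apply_ne_self hτz
        exact ⟨hσz, fun hzs => hz (Finset.mem_erase.2 ⟨hzx, hzs⟩)⟩
      have hsortτ : SortableWithin G τ (2 * ∑ z ∈ s.erase x, G.dist z (τ z)) :=
        ih _ (Finset.erase_ssubset hxs) hmovedτ fun z hz =>
          (hagree z hz).symm ▸ hreach z (Finset.mem_of_mem_erase hz)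
      have hsum : ∑ z ∈ s.erase x, G.dist z (τ z) = ∑ z ∈ s.erase x, G.dist z (σ z) :=
        Finset.sum_congr rfl fun z hz => by rw [hagree z hz]
      have hsort := (SortableWithin.swap_of_reachable (hreach x hxs)).mul hsortτ
      rwa [hτ, swap_mul_self_mul, ← hτ, hsum, ← mul_add,
        Finset.add_sum_erase s (fun z => G.dist z (σ z)) hxs] at hsort
    · push Not at hp
      rcases eq_or_ne σ 1 with rfl | hσ
      · exact .one G _
      obtain ⟨q, hσq⟩ : ∃ q, σ q ≠ q := not_forall.1 fun h => hσ (Equiv.ext h)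
      have hmoved' : {x | σ x ≠ x ∧ x ∉ s.erase q}.Subsingleton := by
        refine Set.subsingleton_singleton.anti fun x ⟨hσx, hx⟩ => (?_ : x = q)
        by_contra hxq
        exact hx (Finset.mem_erase.2 ⟨hxq, hp x hσx⟩)
      exact (ih _ (Finset.erase_ssubset (hp q hσq)) hmoved' fun x hx =>
        hreach x (Finset.mem_of_mem_erase hx)).mono (by gcongr; exact Finset.erase_subset q s)

theorem dist_swap_apply_le {u v : V} (h : G.Adj u v) (x y : V) :
    G.dist x (swap u v y) ≤ G.dist x y + if y ∈ ({u, v} : Finset V) then 1 else 0 := by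
  split_ifs with hy
  · rcases Finset.mem_insert.1 hy with rfl | hy
    · rw [swap_apply_left, ← SimpleGraph.dist_eq_one_iff_adj.2 h]
      exact h.reachable.dist_triangle_right x
    · obtain rfl := Finset.mem_singleton.1 hy
      rw [swap_apply_right, ← SimpleGraph.dist_eq_one_iff_adj.2 h.symm]
      exact h.symm.reachable.dist_triangle_right x
  · rw [Finset.mem_insert, Finset.mem_singleton, not_or] at hy
    rw [swap_apply_of_ne_of_ne hy.1 hy.2, add_zero]

theorem card_filter_apply_mem_le {α β : Type*} [DecidableEq β] {f : α → β}
    (hf : Function.Injective f) (s : Finset α) (t : Finset β) :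
    (s.filter fun x => f x ∈ t).card ≤ t.card :=
  Finset.card_le_card_of_injOn f (fun _ hx => (Finset.mem_filter.1 hx).2) hf.injOn

theorem SortableWithin.sum_dist_le {σ : Perm V} {n : ℕ} (h : SortableWithin G σ n)
    (s : Finset V) : ∑ x ∈ s, G.dist x (σ x) ≤ 2 * n := by
  obtain ⟨l, hlen, hl, rfl⟩ := h
  suffices ∑ x ∈ s, G.dist x ((l.map fun p => swap p.1 p.2).prod x) ≤ 2 * l.length by omega
  clear hlen
  induction l with
  | nil => simp
  | cons e l ih =>
    obtain ⟨he, hl⟩ := List.forall_mem_cons.1 hl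
    simp only [List.map_cons, List.prod_cons, Perm.mul_apply, List.length_cons]
    set τ := (l.map fun p => swap p.1 p.2).prod
    calc ∑ x ∈ s, G.dist x (swap e.1 e.2 (τ x))
        ≤ ∑ x ∈ s, (G.dist x (τ x) + if τ x ∈ ({e.1, e.2} : Finset V) then 1 else 0) :=
          Finset.sum_le_sum fun x _ => dist_swap_apply_le he x (τ x)
      _ = ∑ x ∈ s, G.dist x (τ x) +
            (s.filter fun x => τ x ∈ ({e.1, e.2} : Finset V)).card := by
          rw [Finset.sum_add_distrib, Finset.card_filter]
      _ ≤ 2 * l.length + 2 :=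
          add_le_add (ih hl) ((card_filter_apply_mem_le τ.injective s _).trans Finset.card_le_two)
      _ = 2 * (l.length + 1) := by ring

theorem token_swapping_sortable_within_twice_L_general (G : SimpleGraph V) (σ : Perm V)
    (s : Finset V) (hs : ∀ x, σ x ≠ x → x ∈ s) (hreach : ∀ x ∈ s, G.Reachable x (σ x)) :
    SortableWithin G σ (2 * ∑ x ∈ s, G.dist x (σ x)) ∧
      ∀ k, SortableWithin G σ k → ∑ x ∈ s, G.dist x (σ x) ≤ 2 * k :=
  ⟨sortableWithin_of_subsingleton_moved_notMem (fun x hx => absurd (hs x hx.1) hx.2) hreach,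
    fun _ h => h.sum_dist_le s⟩

end

/-- **4-approximation, existence form.** Every configuration `σ` on a finite
connected simple graph `G` can be sorted by at most `2·L(σ)` swaps along edges of `G`;
consequently, the minimum number of swaps needed to sort `σ` lies between `L(σ)/2` and
`2·L(σ)`: there is a sorting sequence of length at most `2·L(σ)`, and every sorting sequence
of length `k` satisfies `L(σ) ≤ 2k`.  Here `L(σ) = Σ_{x ∈ V} dist_G(x, σ x)`. -/
theorem token_swapping_sortable_within_twice_L
    {V : Type*} [Fintype V] [DecidableEq V]
    (G : SimpleGraph V) (hG : G.Connected) (σ : Equiv.Perm V) :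
    (∃ l : List (V × V),
      l.length ≤ 2 * ∑ x, G.dist x (σ x) ∧
      (∀ p ∈ l, G.Adj p.1 p.2) ∧
      σ = (l.map fun p => Equiv.swap p.1 p.2).prod) ∧
    (∀ (k : ℕ) (l : List (V × V)), l.length = k → (∀ p ∈ l, G.Adj p.1 p.2) →
      σ = (l.map fun p => Equiv.swap p.1 p.2).prod →
      ∑ x, G.dist x (σ x) ≤ 2 * k) :=
  have ⟨hupper, hlower⟩ := token_swapping_sortable_within_twice_L_general G σ Finset.univ
    (fun x _ => Finset.mem_univ x) fun x _ => hG x (σ x)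
  ⟨hupper, fun k l hk hl hσ => hlower k ⟨l, hk.le, hl, hσ⟩⟩
end

section
/- (2-approximation on trees, existence form) Every configuration σ on a finite tree G (a finite connected acyclic simple graph) can be sorted by at most L(σ) swaps along edges of G. -/
/-!
Let `c(σ)` be the number of cycles of `σ`, fixed points included. While `σ` is not sorted, some
swap along an edge `u v` of the tree strictly decreases the potential `L(σ) + c(σ)`. It is at most
`L(σ) + |V|` at the start and equals `|V|` for the identity, whence at most `L(σ)` such swaps sort
`σ`.

To find the swap, fix a misplaced vertex `x` and let each vertex aim at the target of its token, or
at `x` if its token is already home. As a tree has fewer edges than vertices, two adjacent vertices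
`u`, `v` take their first step along the same edge, in opposite directions. They are not both home,
since they cannot both be nearer to `x`. If neither is home, the swap lowers `L` by two and raises
`c` by at most one. If only `v` is home, the swap preserves `L` and merges the fixed point `v` into
the cycle of `u`.
-/

namespace TokenSwapping

open Equiv Module

section Graph

variable {V : Type*} {G : SimpleGraph V}

lemma exists_adj_dist_add_one_eq {v t : V} (hreach : G.Reachable v t) (hvt : v ≠ t) :
    ∃ w, G.Adj v w ∧ G.dist w t + 1 = G.dist v t := by
  obtain ⟨p, hp⟩ := hreach.exists_walk_length_eq_dist
  cases p with
  | nil => exact absurd rfl hvt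
  | @cons _ w _ hvw q =>
    have hq : G.dist w t ≤ q.length := SimpleGraph.dist_le q
    have htri : G.dist v t ≤ G.dist v w + G.dist w t := hvw.reachable.dist_triangle_left t
    rw [SimpleGraph.dist_eq_one_iff_adj.mpr hvw] at htri
    rw [SimpleGraph.Walk.length_cons] at hp
    exact ⟨w, hvw, by lia⟩

lemma exists_apply_apply_eq_of_card_edgeFinset_lt [Fintype V] [Fintype G.edgeSet]
    (hcard : G.edgeFinset.card < Fintype.card V) {g : V → V} (hg : ∀ v, G.Adj v (g v)) :
    ∃ v, g (g v) = v := by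
  obtain ⟨v, -, w, -, hne, heq⟩ := Finset.exists_ne_map_eq_of_card_lt_of_maps_to
    (s := Finset.univ) (f := fun v => s(v, g v)) hcard
    fun v _ => SimpleGraph.mem_edgeFinset.mpr (hg v)
  obtain ⟨hvw, -⟩ | ⟨hv, hw⟩ := Sym2.eq_iff.mp heq
  · exact absurd hvw hne
  · exact ⟨v, by rw [hw, ← hv]⟩

lemma exists_adj_dist_add_one_eq_and_dist_add_one_eq [Finite V] (hG : G.IsTree) {f : V → V}
    (hf : ∀ v, f v ≠ v) :
    ∃ u v, G.Adj u v ∧ G.dist v (f u) + 1 = G.dist u (f u) ∧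
      G.dist u (f v) + 1 = G.dist v (f v) := by
  classical
  have := Fintype.ofFinite V
  choose g hadj hdist using fun v => exists_adj_dist_add_one_eq (hG.connected v (f v)) (hf v).symm
  obtain ⟨v, hv⟩ := exists_apply_apply_eq_of_card_edgeFinset_lt
    (Nat.lt_of_succ_le hG.card_edgeFinset.le) hadj
  have hback := hdist (g v)
  rw [hv] at hback
  exact ⟨v, g v, hadj v, hdist v, hback⟩

lemma exists_adj_dist_add_one_eq_and_fixed_or [Finite V] (hG : G.IsTree) {f : V → V} {x : V}
    (hx : f x ≠ x) :
    ∃ u v, G.Adj u v ∧ G.dist v (f u) + 1 = G.dist u (f u) ∧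
      (f v = v ∨ G.dist u (f v) + 1 = G.dist v (f v)) := by
  classical
  let aim (v : V) : V := if f v = v then x else f v
  have aim_fixed {v : V} (hv : f v = v) : aim v = x := if_pos hv
  have aim_moved {v : V} (hv : f v ≠ v) : aim v = f v := if_neg hv
  have aim_ne (v : V) : aim v ≠ v := by
    by_cases hv : f v = v
    · rw [aim_fixed hv]
      rintro rfl
      exact hx hv
    · rwa [aim_moved hv]
  obtain ⟨u, v, huv, hu, hv⟩ := exists_adj_dist_add_one_eq_and_dist_add_one_eq hG aim_ne
  by_cases hfu : f u = u <;> by_cases hfv : f v = v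
  · rw [aim_fixed hfu] at hu
    rw [aim_fixed hfv] at hv
    lia
  · rw [aim_moved hfv] at hv
    exact ⟨v, u, huv.symm, hv, Or.inl hfu⟩
  · rw [aim_moved hfu] at hu
    exact ⟨u, v, huv, hu, Or.inl hfv⟩
  · rw [aim_moved hfu] at hu
    rw [aim_moved hfv] at hv
    exact ⟨u, v, huv, hu, Or.inr hv⟩

end Graph

section Displacement

variable {V : Type*} [Fintype V] (G : SimpleGraph V)

/-- The total distance `L(σ)` of the tokens of the configuration `σ` to their targets. -/
noncomputable def displacement (σ : Perm V) : ℕ :=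
  ∑ x, G.dist x (σ x)

lemma displacement_one : displacement G 1 = 0 := by
  simp [displacement]

lemma displacement_mul_swap [DecidableEq V] (σ : Perm V) {u v : V} (huv : u ≠ v) :
    displacement G (σ * swap u v) + (G.dist u (σ u) + G.dist v (σ v)) =
      displacement G σ + (G.dist u (σ v) + G.dist v (σ u)) := by
  have split (f : V → ℕ) : ∑ x, f x = f u + f v + ∑ x ∈ {u, v}ᶜ, f x := by
    rw [← Finset.sum_add_sum_compl {u, v}, Finset.sum_pair huv]
  have rest : ∑ x ∈ {u, v}ᶜ, G.dist x ((σ * swap u v) x) = ∑ x ∈ {u, v}ᶜ, G.dist x (σ x) := by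
    refine Finset.sum_congr rfl fun x hx => ?_
    obtain ⟨hxu, hxv⟩ : x ≠ u ∧ x ≠ v := by simpa using hx
    rw [Perm.mul_apply, swap_apply_of_ne_of_ne hxu hxv]
  rw [displacement, displacement, split, rest, split (fun x => G.dist x (σ x))]
  simp only [Perm.mul_apply, swap_apply_left, swap_apply_right]
  ring

end Displacement

lemma finrank_le_finrank_inf_ker_add_one {K M : Type*} [Field K] [AddCommGroup M] [Module K M]
    (p : Submodule K M) [FiniteDimensional K p] (φ : Dual K M) :
    finrank K p ≤ finrank K ↥(p ⊓ φ.ker) + 1 := by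
  have hker : (φ.domRestrict p).ker = φ.ker.comap p.subtype := LinearMap.ker_comp _ _
  have hsum := (φ.domRestrict p).finrank_range_add_finrank_ker
  rw [hker, ← Submodule.finrank_map_subtype_eq, Submodule.map_comap_subtype] at hsum
  have hrange : finrank K (φ.domRestrict p).range ≤ 1 :=
    (Submodule.finrank_le _).trans_eq (finrank_self K)
  lia

section CycleCount

variable {V : Type*}

/-- The functions that are constant on the cycles of `σ`. -/
def invariantFunctions (σ : Perm V) : Submodule ℚ (V → ℚ) :=
  LinearMap.eqLocus (LinearMap.funLeft ℚ ℚ σ) LinearMap.id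

/-- The number of cycles of `σ`, fixed points included. It is encoded as the dimension of the space
of functions that are constant on the cycles, so that the effect of a swap can be read off from the
hyperplane of functions taking equal values at the two swapped points. -/
noncomputable def cycleCount (σ : Perm V) : ℕ :=
  finrank ℚ (invariantFunctions σ)

lemma mem_invariantFunctions {σ : Perm V} {f : V → ℚ} :
    f ∈ invariantFunctions σ ↔ ∀ x, f (σ x) = f x :=
  funext_iff

lemma single_mem_invariantFunctions [DecidableEq V] {σ : Perm V} {v : V} (hv : σ v = v) :
    Pi.single v 1 ∈ invariantFunctions σ := by
  refine mem_invariantFunctions.mpr fun x => ?_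
  have hx : σ x = v ↔ x = v := by rw [← σ.injective.eq_iff (a := x), hv]
  simp only [Pi.single_apply, hx]

lemma cycleCount_one [Fintype V] : cycleCount (1 : Perm V) = Fintype.card V := by
  have htop : invariantFunctions (1 : Perm V) = ⊤ := LinearMap.eqLocus_same _
  rw [cycleCount, htop, finrank_top, finrank_fintype_fun_eq_card]

lemma cycleCount_le_card [Fintype V] (σ : Perm V) : cycleCount σ ≤ Fintype.card V :=
  (Submodule.finrank_le _).trans_eq (finrank_fintype_fun_eq_card ℚ)

/-- The linear functional `f ↦ f u - f v`, whose kernel is the hyperplane of functions taking equal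
values at `u` and `v`. -/
def difference (u v : V) : Dual ℚ (V → ℚ) :=
  (LinearMap.proj u : (V → ℚ) →ₗ[ℚ] ℚ) - LinearMap.proj v

lemma mem_ker_difference {u v : V} {f : V → ℚ} : f ∈ (difference u v).ker ↔ f u = f v :=
  LinearMap.mem_ker.trans sub_eq_zero

variable [DecidableEq V]

lemma invariantFunctions_mul_swap_inf_ker (σ : Perm V) (u v : V) :
    invariantFunctions (σ * swap u v) ⊓ (difference u v).ker =
      invariantFunctions σ ⊓ (difference u v).ker := by
  ext f
  simp only [Submodule.mem_inf, mem_invariantFunctions, mem_ker_difference]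
  refine and_congr_left fun huv => ?_
  rw [← (swap u v).forall_congr_right (q := fun x => f (σ x) = f x)]
  simp only [Perm.mul_apply, apply_swap_eq_self huv]

lemma invariantFunctions_mul_swap_le_ker {σ : Perm V} {v : V} (u : V) (hv : σ v = v) :
    invariantFunctions (σ * swap u v) ≤ (difference u v).ker := fun f hf => by
  have := mem_invariantFunctions.mp hf u
  rw [Perm.mul_apply, swap_apply_left, hv] at this
  exact mem_ker_difference.mpr this.symm

lemma invariantFunctions_mul_swap_lt {σ : Perm V} {u v : V} (huv : u ≠ v) (hv : σ v = v) :
    invariantFunctions (σ * swap u v) < invariantFunctions σ := by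
  rw [← inf_eq_left.mpr (invariantFunctions_mul_swap_le_ker u hv),
    invariantFunctions_mul_swap_inf_ker, inf_lt_left]
  intro hle
  have := mem_ker_difference.mp (hle (single_mem_invariantFunctions hv))
  simp [huv] at this

lemma cycleCount_mul_swap_le [Finite V] (σ : Perm V) (u v : V) :
    cycleCount (σ * swap u v) ≤ cycleCount σ + 1 :=
  calc cycleCount (σ * swap u v)
      ≤ finrank ℚ ↥(invariantFunctions (σ * swap u v) ⊓ (difference u v).ker) + 1 :=
        finrank_le_finrank_inf_ker_add_one _ _
    _ = finrank ℚ ↥(invariantFunctions σ ⊓ (difference u v).ker) + 1 := by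
        rw [invariantFunctions_mul_swap_inf_ker]
    _ ≤ cycleCount σ + 1 := Nat.add_le_add_right (Submodule.finrank_mono inf_le_left) 1

lemma cycleCount_mul_swap_lt [Finite V] {σ : Perm V} {u v : V} (huv : u ≠ v) (hv : σ v = v) :
    cycleCount (σ * swap u v) < cycleCount σ :=
  Submodule.finrank_lt_finrank_of_lt (invariantFunctions_mul_swap_lt huv hv)

end CycleCount

section Sorting

variable {V : Type*} [Fintype V] [DecidableEq V] {G : SimpleGraph V}

lemma exists_adj_displacement_add_cycleCount_lt (hG : G.IsTree) {σ : Perm V} (hσ : σ ≠ 1) :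
    ∃ u v, G.Adj u v ∧
      displacement G (σ * swap u v) + cycleCount (σ * swap u v) <
        displacement G σ + cycleCount σ := by
  obtain ⟨x, hx⟩ : ∃ x, σ x ≠ x := DFunLike.ne_iff.mp hσ
  obtain ⟨u, v, huv, hu, hv⟩ := exists_adj_dist_add_one_eq_and_fixed_or hG hx
  refine ⟨u, v, huv, ?_⟩
  have hdisp := displacement_mul_swap G σ huv.ne
  obtain hfix | hcloser := hv
  · have hcycle := cycleCount_mul_swap_lt huv.ne hfix
    rw [hfix, SimpleGraph.dist_self, SimpleGraph.dist_eq_one_iff_adj.mpr huv] at hdisp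
    lia
  · have hcycle := cycleCount_mul_swap_le σ u v
    lia

theorem exists_swaps_length_add_card_le (hG : G.IsTree) (σ : Perm V) :
    ∃ l : List (V × V),
      l.length + Fintype.card V ≤ displacement G σ + cycleCount σ ∧
      (∀ p ∈ l, G.Adj p.1 p.2) ∧
      σ = (l.map fun p => swap p.1 p.2).prod := by
  induction hn : displacement G σ + cycleCount σ using Nat.strong_induction_on generalizing σ with
  | _ n ih =>
    subst hn
    obtain rfl | hσ := eq_or_ne σ 1
    · exact ⟨[], by simp [displacement_one, cycleCount_one], by simp, by simp⟩
    · obtain ⟨u, v, huv, hlt⟩ := exists_adj_displacement_add_cycleCount_lt hG hσ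
      obtain ⟨l, hlen, hadj, hprod⟩ := ih _ hlt _ rfl
      refine ⟨l ++ [(u, v)], ?_, ?_, ?_⟩
      · rw [List.length_append, List.length_singleton]
        lia
      · simpa [or_imp, forall_and] using And.intro (fun a b => hadj (a, b)) huv
      · rw [List.map_append, List.prod_append, ← hprod, List.map_singleton, List.prod_singleton,
          mul_assoc, swap_mul_self, mul_one]

end Sorting

end TokenSwapping

/-- **2-approximation on trees, existence form.** Every configuration `σ` on
a finite tree `G` (a finite connected acyclic simple graph) can be sorted by at most `L(σ)`
swaps along edges of `G`, where `L(σ) = Σ_{x ∈ V} dist_G(x, σ x)`. -/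
theorem token_swapping_tree_sortable_within_L
    {V : Type*} [Fintype V] [DecidableEq V]
    (G : SimpleGraph V) (hT : G.IsTree) (σ : Equiv.Perm V) :
    ∃ l : List (V × V),
      l.length ≤ ∑ x, G.dist x (σ x) ∧
      (∀ p ∈ l, G.Adj p.1 p.2) ∧
      σ = (l.map fun p => Equiv.swap p.1 p.2).prod := by
  obtain ⟨l, hlen, hadj, hprod⟩ := TokenSwapping.exists_swaps_length_add_card_le hT σ
  have hcycle : TokenSwapping.cycleCount σ ≤ Fintype.card V := TokenSwapping.cycleCount_le_card σ
  have hlen' : l.length ≤ TokenSwapping.displacement G σ := by lia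
  exact ⟨l, hlen', hadj, hprod⟩
end

section
/- (Theorem 1.2, colored version) Let G be a finite connected simple graph with vertex colors D and token colors f, and assume that at least one bijection μ of V with f(v) = D(μ(v)) for all v exists. Then the colored instance can be solved by at most 2·L* swaps along edges of G; if moreover G is a tree, it can be solved by at most L* swaps. -/
/-!
Both bounds hold for a bijection `μ` attaining `L*`, so colors play no further role.

On a connected graph, split `μ` into cycles; a cycle `(v₁ … vₖ)` is the product of the
transpositions of consecutive `vᵢ`, and transposing two vertices at distance `d` takes at most `2 d`
swaps along a geodesic (move one token over, and the other one back).

On a tree, any `μ ≠ 1` admits a swap of neighbors `x`, `y` for which the token on `x` gets closer to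
its target and the token on `y` either gets closer too, or was at home. The first kind of swap
lowers the total distance by two and raises the number of cycles by at most one; the second kind
preserves the total distance but absorbs the fixed point `y` into another cycle. Hence the total
distance plus the number of cycles drops with every swap. It starts at no more than `L* + |V|` and
ends, at the identity, at `|V|`, so at most `L*` swaps are made.
-/

/-- The permutation `ρ` is a product of at most `n` transpositions along edges of `G`, i.e. it can
be realized by at most `n` swaps of tokens. -/
def IsEdgeSwapProduct {V : Type*} [DecidableEq V] (G : SimpleGraph V) (ρ : Equiv.Perm V) (n : ℕ) :
    Prop :=
  ∃ l : List (V × V), l.length ≤ n ∧ (∀ p ∈ l, G.Adj p.1 p.2) ∧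
    ρ = (l.map fun p => Equiv.swap p.1 p.2).prod

/-- The total distance of the tokens from their targets, when the token on `v` has to reach `μ v`.
The quantity `L*` is the minimum of this over all admissible `μ`. -/
noncomputable def totalDist {V : Type*} [Fintype V] (G : SimpleGraph V) (μ : Equiv.Perm V) : ℕ :=
  ∑ v, G.dist v (μ v)

/-- The space of rational functions on `V` that are constant on every cycle of `μ`. -/
def cycleFunctions {V : Type*} (μ : Equiv.Perm V) : Submodule ℚ (V → ℚ) :=
  LinearMap.eqLocus (LinearMap.funLeft ℚ ℚ μ) LinearMap.id

/-- The number of cycles of a permutation of a finite type, fixed points included. Counting cycles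
by the dimension of `cycleFunctions μ` makes the effect of a transposition a matter of one linear
equation. -/
noncomputable def cycleCount {V : Type*} (μ : Equiv.Perm V) : ℕ :=
  Module.finrank ℚ (cycleFunctions μ)

theorem finrank_le_finrank_inf_ker_add_one {K E : Type*} [Field K] [AddCommGroup E] [Module K E]
    (W : Submodule K E) [FiniteDimensional K W] (φ : E →ₗ[K] K) :
    Module.finrank K W ≤ Module.finrank K (W ⊓ LinearMap.ker φ : Submodule K E) + 1 := by
  have hker : Module.finrank K (LinearMap.ker (φ.domRestrict W)) =
      Module.finrank K (W ⊓ LinearMap.ker φ : Submodule K E) := by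
    rw [← Submodule.finrank_map_subtype_eq, LinearMap.ker_domRestrict, Submodule.map_comap_subtype]
  have hrange : Module.finrank K (LinearMap.range (φ.domRestrict W)) ≤ 1 :=
    (Submodule.finrank_le _).trans_eq (Module.finrank_self K)
  have := (φ.domRestrict W).finrank_range_add_finrank_ker
  omega

section CycleCount

variable {V : Type*} {μ : Equiv.Perm V} {x y : V}

theorem mem_cycleFunctions {g : V → ℚ} : g ∈ cycleFunctions μ ↔ ∀ v, g (μ v) = g v :=
  funext_iff

theorem cycleFunctions_one : cycleFunctions (1 : Equiv.Perm V) = ⊤ :=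
  eq_top_iff.2 fun _ _ => mem_cycleFunctions.2 fun _ => rfl

theorem cycleCount_one [Fintype V] : cycleCount (1 : Equiv.Perm V) = Fintype.card V := by
  rw [cycleCount, cycleFunctions_one, finrank_top, Module.finrank_fintype_fun_eq_card]

theorem cycleCount_le_card [Fintype V] : cycleCount μ ≤ Fintype.card V :=
  (Submodule.finrank_le _).trans_eq (Module.finrank_fintype_fun_eq_card ℚ)

theorem mem_cycleFunctions_of_mul_swap [DecidableEq V] {g : V → ℚ}
    (hg : g ∈ cycleFunctions (μ * Equiv.swap x y)) (hxy : g x = g y) : g ∈ cycleFunctions μ := by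
  refine mem_cycleFunctions.2 fun v => ?_
  calc g (μ v) = g ((μ * Equiv.swap x y) (Equiv.swap x y v)) := by simp
    _ = g (Equiv.swap x y v) := mem_cycleFunctions.1 hg _
    _ = g v := by rw [Equiv.swap_apply_def]; split_ifs <;> simp_all

theorem cycleCount_mul_swap_le [Finite V] [DecidableEq V] :
    cycleCount (μ * Equiv.swap x y) ≤ cycleCount μ + 1 := by
  let δ := (LinearMap.proj x : (V → ℚ) →ₗ[ℚ] ℚ) - LinearMap.proj y
  have hle : cycleFunctions (μ * Equiv.swap x y) ⊓ LinearMap.ker δ ≤ cycleFunctions μ :=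
    fun g hg => mem_cycleFunctions_of_mul_swap hg.1 (sub_eq_zero.1 hg.2)
  exact (finrank_le_finrank_inf_ker_add_one _ δ).trans
    (Nat.add_le_add_right (Submodule.finrank_mono hle) 1)

theorem cycleCount_mul_swap_lt [Finite V] [DecidableEq V] (hxy : x ≠ y) (hy : μ y = y) :
    cycleCount (μ * Equiv.swap x y) < cycleCount μ := by
  have heq : ∀ g ∈ cycleFunctions (μ * Equiv.swap x y), g x = g y := fun g hg => by
    simpa [hy] using (mem_cycleFunctions.1 hg x).symm
  refine Submodule.finrank_lt_finrank_of_lt (SetLike.lt_iff_le_and_exists.2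
    ⟨fun g hg => mem_cycleFunctions_of_mul_swap hg (heq g hg), Pi.single y 1, ?_, fun h => ?_⟩)
  · have hfiber (v : V) : μ v = y ↔ v = y := by rw [← μ.apply_eq_iff_eq (x := v), hy]
    exact mem_cycleFunctions.2 fun v => by simp only [Pi.single_apply, hfiber]
  · simpa [hxy] using heq _ h

end CycleCount

section Graph

variable {V : Type*} {G : SimpleGraph V}

theorem exists_adj_dist_add_one_eq {u v : V} (huv : G.Reachable u v) (hne : u ≠ v) :
    ∃ w, G.Adj u w ∧ G.dist w v + 1 = G.dist u v := by
  obtain ⟨p, hp⟩ := huv.exists_walk_length_eq_dist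
  cases p with
  | nil => exact absurd rfl hne
  | @cons _ w _ huw p =>
    have hle : G.dist w v ≤ p.length := SimpleGraph.dist_le p
    have hge : G.dist u v ≤ G.dist u w + G.dist w v := huw.reachable.dist_triangle_left v
    rw [SimpleGraph.dist_eq_one_iff_adj.2 huw] at hge
    rw [SimpleGraph.Walk.length_cons] at hp
    exact ⟨w, huw, by omega⟩

theorem eq_penultimate_of_adj_of_dist_le (hG : G.IsAcyclic) {r y a : V} {p : G.Walk r y}
    (hp : p.length = G.dist r y) (hya : G.Adj y a) (hra : G.dist r a ≤ G.dist r y) :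
    a = p.penultimate := by
  have hpath : p.IsPath := p.isPath_of_length_eq_dist hp
  refine hG.eq_penultimate_of_adj_end hpath hya ?_
  by_contra ha
  obtain ⟨q, hq, hqa⟩ := (p.reachable.trans hya.reachable).exists_path_of_dist
  have hy : y ∈ q.support :=
    hG.mem_support_of_ne_mem_support_of_adj_of_isPath hq hpath hya.symm ha
  have hlen : q.length = p.length + 1 := by
    rw [hG.path_concat hpath hq hya hy, SimpleGraph.Walk.length_concat]
  omega

theorem eq_of_adj_of_dist_le (hG : G.IsAcyclic) {r y a b : V} (hry : G.Reachable r y)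
    (hya : G.Adj y a) (hyb : G.Adj y b) (hra : G.dist r a ≤ G.dist r y)
    (hrb : G.dist r b ≤ G.dist r y) : a = b := by
  obtain ⟨p, hp⟩ := hry.exists_walk_length_eq_dist
  exact (eq_penultimate_of_adj_of_dist_le hG hp hya hra).trans
    (eq_penultimate_of_adj_of_dist_le hG hp hyb hrb).symm

theorem exists_adj_closer_and_fixed_or_closer [Finite V] (hG : G.IsTree) {μ : Equiv.Perm V}
    (hμ : μ ≠ 1) :
    ∃ x y, G.Adj x y ∧ G.dist y (μ x) + 1 = G.dist x (μ x) ∧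
      (μ y = y ∨ G.dist x (μ y) + 1 = G.dist y (μ y)) := by
  have hnext : ∀ x, ∃ y, μ x ≠ x → G.Adj x y ∧ G.dist y (μ x) + 1 = G.dist x (μ x) := fun x => by
    by_cases hx : μ x = x
    · exact ⟨x, absurd hx⟩
    · obtain ⟨y, hy⟩ := exists_adj_dist_add_one_eq (hG.connected x (μ x)) (Ne.symm hx)
      exact ⟨y, fun _ => hy⟩
  choose next hnext using hnext
  obtain ⟨r, hr⟩ : ∃ r, μ r ≠ r := not_forall.1 fun h => hμ (Equiv.ext h)
  -- Among the tokens that want to move away from `r`, take one farthest from `r`: a token on the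
  -- next vertex of its route, unless it is at home, must want to come back.
  let outward : Set V := {x | μ x ≠ x ∧ G.dist r x < G.dist r (next x)}
  have hr_mem : r ∈ outward :=
    ⟨hr, by simp [SimpleGraph.dist_eq_one_iff_adj.2 (hnext r hr).1]⟩
  obtain ⟨x, ⟨hx, hlt⟩, hmax⟩ := outward.toFinite.exists_maximalFor (G.dist r) _ ⟨r, hr_mem⟩
  obtain ⟨hadj, hcloser⟩ := hnext x hx
  refine ⟨x, next x, hadj, hcloser, or_iff_not_imp_left.2 fun hy => ?_⟩
  obtain ⟨hadj', hcloser'⟩ := hnext (next x) hy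
  have hback : G.dist r (next (next x)) ≤ G.dist r (next x) :=
    not_lt.1 fun h => hlt.not_ge (hmax ⟨hy, h⟩ hlt.le)
  rwa [eq_of_adj_of_dist_le hG.isAcyclic (hG.connected r _) hadj' hadj.symm hback hlt.le]
    at hcloser'

end Graph

section TotalDist

variable {V : Type*} [Fintype V] {G : SimpleGraph V}

theorem totalDist_one : totalDist G 1 = 0 := by
  simp [totalDist]

theorem totalDist_mul_of_disjoint {σ τ : Equiv.Perm V} (h : σ.Disjoint τ) :
    totalDist G (σ * τ) = totalDist G σ + totalDist G τ := by
  simp only [totalDist, ← Finset.sum_add_distrib]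
  refine Finset.sum_congr rfl fun v _ => ?_
  rcases h v with hv | hv
  · simp [h.commute.eq, hv]
  · simp [hv]

theorem totalDist_mul_swap [DecidableEq V] (μ : Equiv.Perm V) {x y : V} (hxy : x ≠ y) :
    totalDist G (μ * Equiv.swap x y) + (G.dist x (μ x) + G.dist y (μ y)) =
      totalDist G μ + (G.dist x (μ y) + G.dist y (μ x)) := by
  have hsplit (F : V → ℕ) : ∑ v, F v = F x + F y + ∑ v ∈ {x, y}ᶜ, F v := by
    rw [← Finset.sum_pair hxy, Finset.sum_add_sum_compl]
  have hrest : ∑ v ∈ {x, y}ᶜ, G.dist v ((μ * Equiv.swap x y) v) =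
      ∑ v ∈ {x, y}ᶜ, G.dist v (μ v) := by
    refine Finset.sum_congr rfl fun v hv => ?_
    simp only [Finset.mem_compl, Finset.mem_insert, Finset.mem_singleton, not_or] at hv
    rw [Equiv.Perm.mul_apply, Equiv.swap_apply_of_ne_of_ne hv.1 hv.2]
  rw [totalDist, totalDist, hsplit, hsplit fun v => G.dist v (μ v), hrest]
  simp only [Equiv.Perm.mul_apply, Equiv.swap_apply_left, Equiv.swap_apply_right]
  ring

theorem exists_adj_totalDist_add_cycleCount_lt [DecidableEq V] (hG : G.IsTree)
    {μ : Equiv.Perm V} (hμ : μ ≠ 1) :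
    ∃ x y, G.Adj x y ∧ totalDist G (μ * Equiv.swap x y) + cycleCount (μ * Equiv.swap x y) <
      totalDist G μ + cycleCount μ := by
  obtain ⟨x, y, hxy, hx, hy⟩ := exists_adj_closer_and_fixed_or_closer hG hμ
  have htotal := totalDist_mul_swap (G := G) μ hxy.ne
  refine ⟨x, y, hxy, ?_⟩
  rcases hy with hfixed | hcloser
  · have hcycles := cycleCount_mul_swap_lt hxy.ne hfixed
    rw [hfixed, SimpleGraph.dist_self, SimpleGraph.dist_eq_one_iff_adj.2 hxy] at htotal
    omega
  · have hcycles : cycleCount (μ * Equiv.swap x y) ≤ cycleCount μ + 1 := cycleCount_mul_swap_le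
    omega

end TotalDist

namespace IsEdgeSwapProduct

variable {V : Type*} [DecidableEq V] {G : SimpleGraph V} {ρ σ : Equiv.Perm V} {m n : ℕ}

theorem one : IsEdgeSwapProduct G 1 n :=
  ⟨[], by simp⟩

theorem swap_of_adj {u v : V} (huv : G.Adj u v) : IsEdgeSwapProduct G (Equiv.swap u v) 1 :=
  ⟨[(u, v)], by simp [huv]⟩

theorem mono (h : IsEdgeSwapProduct G ρ m) (hmn : m ≤ n) : IsEdgeSwapProduct G ρ n :=
  let ⟨l, hl, hprod⟩ := h
  ⟨l, hl.trans hmn, hprod⟩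

theorem mul (hρ : IsEdgeSwapProduct G ρ m) (hσ : IsEdgeSwapProduct G σ n) :
    IsEdgeSwapProduct G (ρ * σ) (m + n) := by
  obtain ⟨l, hl, hadj, rfl⟩ := hρ
  obtain ⟨l', hl', hadj', rfl⟩ := hσ
  refine ⟨l ++ l', ?_, List.forall_mem_append.2 ⟨hadj, hadj'⟩, ?_⟩
  · rw [List.length_append]
    exact add_le_add hl hl'
  · rw [List.map_append, List.prod_append]

theorem swap_of_walk {u v : V} (p : G.Walk u v) :
    IsEdgeSwapProduct G (Equiv.swap u v) (2 * p.length) := by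
  induction p with
  | nil => rw [Equiv.swap_self]; exact one
  | @cons u w v huw p ih =>
    rw [SimpleGraph.Walk.length_cons]
    rcases eq_or_ne u v with rfl | huv
    · rw [Equiv.swap_self]; exact one
    rcases eq_or_ne w v with rfl | hwv
    · exact (swap_of_adj huw).mono (by omega)
    have hconj : Equiv.swap u w * Equiv.swap w v * Equiv.swap u w = Equiv.swap u v := by
      rw [Equiv.swap_comm w v, Equiv.swap_comm u w,
        Equiv.swap_mul_swap_mul_swap hwv.symm huv.symm]
    rw [← hconj]
    exact (((swap_of_adj huw).mul ih).mul (swap_of_adj huw)).mono (by omega)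

theorem swap_of_reachable {u v : V} (huv : G.Reachable u v) :
    IsEdgeSwapProduct G (Equiv.swap u v) (2 * G.dist u v) := by
  obtain ⟨p, hp⟩ := huv.exists_walk_length_eq_dist
  exact hp ▸ swap_of_walk p

theorem formPerm_iterate (hG : G.Preconnected) (φ : V → V) (a : V) (n : ℕ) :
    IsEdgeSwapProduct G (List.iterate φ a n).formPerm
      (2 * ((List.iterate φ a n).map fun v => G.dist v (φ v)).sum) := by
  induction n generalizing a with
  | zero => exact one
  | succ n ih =>
    cases n with
    | zero => exact one
    | succ n =>
      rw [List.iterate, List.map_cons, List.sum_cons, mul_add]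
      exact (swap_of_reachable (hG a (φ a))).mul (ih (φ a))

theorem of_isCycle [Fintype V] (hG : G.Preconnected) (hσ : σ.IsCycle) :
    IsEdgeSwapProduct G σ (2 * totalDist G σ) := by
  obtain ⟨x, hx, -⟩ := id hσ
  have hcycle : (σ.toList x).formPerm = σ := by
    rw [Equiv.Perm.formPerm_toList, hσ.cycleOf_eq hx]
  have hsum : ((σ.toList x).map fun v => G.dist v (σ v)).sum ≤ totalDist G σ := by
    rw [← List.sum_toFinset _ (σ.nodup_toList x)]
    exact Finset.sum_le_sum_of_subset (Finset.subset_univ _)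
  have hlist : IsEdgeSwapProduct G (σ.toList x).formPerm
      (2 * ((σ.toList x).map fun v => G.dist v (σ v)).sum) := formPerm_iterate hG σ x _
  rw [hcycle] at hlist
  exact hlist.mono (Nat.mul_le_mul_left 2 hsum)

theorem of_preconnected [Fintype V] (hG : G.Preconnected) (μ : Equiv.Perm V) :
    IsEdgeSwapProduct G μ (2 * totalDist G μ) := by
  induction μ using Equiv.Perm.cycle_induction_on with
  | base_one => exact one
  | base_cycles σ hσ => exact of_isCycle hG hσ
  | induction_disjoint σ τ hdisj _ hσ hτ =>
    rw [totalDist_mul_of_disjoint hdisj, mul_add]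
    exact hσ.mul hτ

theorem exists_add_card_le_of_isTree [Fintype V] (hG : G.IsTree) (μ : Equiv.Perm V) :
    ∃ m, IsEdgeSwapProduct G μ m ∧ m + Fintype.card V ≤ totalDist G μ + cycleCount μ := by
  induction hk : totalDist G μ + cycleCount μ using Nat.strong_induction_on generalizing μ with
  | _ k ih =>
    rcases eq_or_ne μ 1 with rfl | hμ
    · exact ⟨0, one, by rw [← hk, totalDist_one, cycleCount_one]⟩
    obtain ⟨x, y, hxy, hlt⟩ := exists_adj_totalDist_add_cycleCount_lt hG hμ
    obtain ⟨m, hm, hcard⟩ := ih _ (hk ▸ hlt) _ rfl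
    refine ⟨m + 1, ?_, by omega⟩
    simpa only [Equiv.mul_swap_mul_self] using hm.mul (swap_of_adj hxy)

theorem of_isTree [Fintype V] (hG : G.IsTree) (μ : Equiv.Perm V) :
    IsEdgeSwapProduct G μ (totalDist G μ) := by
  obtain ⟨m, hm, hcard⟩ := exists_add_card_le_of_isTree hG μ
  have hcycles : cycleCount μ ≤ Fintype.card V := cycleCount_le_card
  exact hm.mono (by omega)

end IsEdgeSwapProduct

/-- **Theorem 1.2, colored version.** Let `G` be a finite connected simple
graph with vertex colors `D` and token colors `f` (the token initially on `v` has color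
`f v`), and assume that at least one bijection `μ` of `V` with `f v = D (μ v)` for all `v`
exists.  Then the colored instance can be solved by at most `2·L*` swaps along edges of
`G`: there is a permutation `ρ` of `V` that is a product of at most `2·L*` transpositions
along edges of `G` with `f v = D (ρ v)` for every `v` (the token starting on `v` ends on
vertex `ρ v`, so every vertex holds a token of its own color).  If moreover `G` is a tree,
it can be solved by at most `L*` swaps.  Here `L*` is the minimum of
`Σ_{v ∈ V} dist_G(v, μ v)` over all bijections `μ` of `V` satisfying `f v = D (μ v)` for
all `v`. -/
theorem colored_token_swapping_solvable_within_twice_Lstar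
    {V : Type*} {C : Type*} [Fintype V] [DecidableEq V]
    (G : SimpleGraph V) (hG : G.Connected)
    (D f : V → C)
    (hex : ∃ μ : Equiv.Perm V, ∀ v, f v = D (μ v)) :
    (∃ (ρ : Equiv.Perm V) (l : List (V × V)),
      l.length ≤ 2 * sInf {n : ℕ | ∃ μ : Equiv.Perm V, (∀ v, f v = D (μ v)) ∧
        n = ∑ v, G.dist v (μ v)} ∧
      (∀ p ∈ l, G.Adj p.1 p.2) ∧
      ρ = (l.map fun p => Equiv.swap p.1 p.2).prod ∧
      ∀ v, f v = D (ρ v)) ∧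
    (G.IsTree →
      ∃ (ρ : Equiv.Perm V) (l : List (V × V)),
        l.length ≤ sInf {n : ℕ | ∃ μ : Equiv.Perm V, (∀ v, f v = D (μ v)) ∧
          n = ∑ v, G.dist v (μ v)} ∧
        (∀ p ∈ l, G.Adj p.1 p.2) ∧
        ρ = (l.map fun p => Equiv.swap p.1 p.2).prod ∧
        ∀ v, f v = D (ρ v)) := by
  obtain ⟨μ₀, hμ₀⟩ := hex
  obtain ⟨μ, hμ, hmin⟩ := Nat.sInf_mem (s := {n : ℕ | ∃ μ : Equiv.Perm V,
    (∀ v, f v = D (μ v)) ∧ n = ∑ v, G.dist v (μ v)}) ⟨_, μ₀, hμ₀, rfl⟩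
  rw [hmin]
  constructor
  · obtain ⟨l, hlen, hadj, hprod⟩ := IsEdgeSwapProduct.of_preconnected hG.preconnected μ
    exact ⟨μ, l, hlen, hadj, hprod, hμ⟩
  · intro hT
    obtain ⟨l, hlen, hadj, hprod⟩ := IsEdgeSwapProduct.of_isTree hT μ
    exact ⟨μ, l, hlen, hadj, hprod, hμ⟩
end
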